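/- arXiv:1610.04158 — 8 statements merged into one kernel-verified Lean document; each statement's English description precedes it below -/
import Mathlib

section
/- Upper bound (recovery sequence) for the one-dimensional spin energy with nearest and n-th neighbour interactions: Let u : ℝ → ℝ satisfy 0 ≤ u(x) ≤ 1 for all x ∈ (0,1) and have finite pointwise total variation on (0,1). Then there exists a sequence (u_n)_{n≥2}, with u_n : {1,…,n²} → {0,1}, whose associated step functions converge weakly-* in L^∞(0,1) to u and such that limsup_{n→∞} F_n(u_n) ≤ 2·λ({x ∈ (0,1) : 0 < u(x) < 1}) + Var(u;(0,1)). -/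
open MeasureTheory Filter Set
open scoped ENNReal

noncomputable section

/-- The discrete spin energy
`F_n(u) = (1/n)·( Σ_{i=1}^{n²−1} (u_i − u_{i+1})² + Σ_{i=1}^{n²−n} (u_i − u_{i+n})² )`. -/
def discreteEnergy (n : ℕ) (u : ℕ → ℝ) : ℝ :=
  (1 / (n : ℝ)) * ((∑ i ∈ Finset.Icc 1 (n ^ 2 - 1), (u i - u (i + 1)) ^ 2) +
    ∑ i ∈ Finset.Icc 1 (n ^ 2 - n), (u i - u (i + n)) ^ 2)

/-- The step function associated with a discrete spin function: `x ↦ u_i` for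
`x ∈ ((i−1)/n², i/n²]`. -/
def stepFun (n : ℕ) (u : ℕ → ℝ) : ℝ → ℝ := fun x => u (⌈(n : ℝ) ^ 2 * x⌉.toNat)

/-- Weak-* convergence in `L^∞(I)`: `∫_I v_n g → ∫_I w g` for every integrable `g` on `I`. -/
def WeakStarTo (I : Set ℝ) (v : ℕ → ℝ → ℝ) (w : ℝ → ℝ) : Prop :=
  ∀ g : ℝ → ℝ, IntegrableOn g I volume →
    Tendsto (fun n => ∫ x in I, v n x * g x) atTop (nhds (∫ x in I, w x * g x))


lemma sum_range_mul_aux (f : ℕ → ℝ) (n K : ℕ) :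
    ∑ p ∈ Finset.range (K * n), f p = ∑ k ∈ Finset.range K, ∑ j ∈ Finset.range n, f (k * n + j) := by
  induction K with
  | zero => simp
  | succ K ih => rw [Nat.succ_mul, Finset.sum_range_add, ih, Finset.sum_range_succ]

/-- indicator of `j < m` -/
def ind (m j : ℕ) : ℝ := if j < m then 1 else 0

/-- the discrete spin function built from the row counts `m` -/
def rowSpin (n : ℕ) (m : ℕ → ℕ) (i : ℕ) : ℝ := ind (m ((i - 1) / n)) ((i - 1) % n)

lemma ind_zero_one (m j : ℕ) : ind m j = 0 ∨ ind m j = 1 := by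
  unfold ind; split_ifs <;> simp

lemma rowSpin_eq (n : ℕ) (m : ℕ → ℕ) (k j : ℕ) (hj : j < n) :
    rowSpin n m (k * n + j + 1) = ind (m k) j := by
  have hn : 0 < n := by omega
  unfold rowSpin
  have h1 : (k * n + j + 1 - 1) / n = k := by
    rw [Nat.add_sub_cancel, add_comm, Nat.add_mul_div_right _ _ hn, Nat.div_eq_of_lt hj, zero_add]
  have h2 : (k * n + j + 1 - 1) % n = j := by
    rw [Nat.add_sub_cancel, add_comm, Nat.add_mul_mod_self_right, Nat.mod_eq_of_lt hj]
  rw [h1, h2]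

lemma sum_inner_row (N m : ℕ) :
    ∑ j ∈ Finset.range N, (ind m j - ind m (j + 1)) ^ 2 = if 0 < m ∧ m < N + 1 then 1 else 0 := by
  induction N with
  | zero => simp; omega
  | succ N ih =>
    rw [Finset.sum_range_succ, ih]
    unfold ind
    split_ifs <;> first | omega | norm_num

lemma sum_vert (N a b : ℕ) :
    ∑ j ∈ Finset.range N, (ind a j - ind b j) ^ 2 = |((min a N : ℕ) : ℝ) - (min b N : ℕ)| := by
  induction N with
  | zero => simp
  | succ N ih =>
    rw [Finset.sum_range_succ, ih]
    unfold ind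
    by_cases ha : N < a <;> by_cases hb : N < b
    · simp [ha, hb, min_eq_right ha.le, min_eq_right hb.le]
    · have hb' : b ≤ N := by omega
      rw [min_eq_right ha.le, min_eq_left hb', min_eq_right ha, min_eq_left (by omega)]
      have : (b : ℝ) ≤ N := by exact_mod_cast hb'
      rw [abs_of_nonneg (by linarith), abs_of_nonneg (by push_cast; linarith)]
      simp [ha, hb]; ring
    · have ha' : a ≤ N := by omega
      rw [min_eq_left ha', min_eq_right hb.le, min_eq_right (show N + 1 ≤ b from hb),
        min_eq_left (show a ≤ N + 1 by omega)]
      have : (a : ℝ) ≤ N := by exact_mod_cast ha'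
      rw [abs_of_nonpos (by linarith), abs_of_nonpos (by push_cast; linarith)]
      simp [ha, hb]; ring
    · rw [min_eq_left (by omega), min_eq_left (by omega), min_eq_left (by omega),
        min_eq_left (by omega)]
      simp [ha, hb]

/-- indicator of a mixed row -/
def mix (n m : ℕ) : ℝ := if 0 < m ∧ m < n then 1 else 0

lemma cost_le (N a b : ℕ) (ha : a ≤ N + 1) (hb : b ≤ N + 1) :
    (ind a N - ind b 0) ^ 2 ≤ mix (N + 1) b + (ind b N - ind a N) +
      2 * |(b : ℝ) - a| / ((N + 1 : ℕ) : ℝ) := by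
  have hpos : (0 : ℝ) < ((N + 1 : ℕ) : ℝ) := by positivity
  have h0 : 0 ≤ 2 * |(b : ℝ) - a| / ((N + 1 : ℕ) : ℝ) := by positivity
  by_cases hc : a = N + 1 ∧ b = 0
  · obtain ⟨rfl, rfl⟩ := hc
    have : 2 * |((0 : ℕ) : ℝ) - ((N + 1 : ℕ) : ℝ)| / ((N + 1 : ℕ) : ℝ) = 2 := by
      rw [Nat.cast_zero, zero_sub, abs_neg, abs_of_pos hpos]; field_simp
    rw [this]; simp [ind, mix]; norm_num
  · have : (ind a N - ind b 0) ^ 2 ≤ mix (N + 1) b + (ind b N - ind a N) := by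
      unfold ind mix
      split_ifs <;> first | omega | norm_num
    linarith

lemma energy_le (N : ℕ) (m : ℕ → ℕ) (hm : ∀ k, m k ≤ N + 1) :
    discreteEnergy (N + 1) (rowSpin (N + 1) m) ≤ (1 / ((N + 1 : ℕ) : ℝ)) *
      (2 * ∑ k ∈ Finset.range (N + 1), mix (N + 1) (m k) + 2 +
        2 * (∑ k ∈ Finset.range N, |(m (k + 1) : ℝ) - m k|) / ((N + 1 : ℕ) : ℝ) +
        ∑ k ∈ Finset.range N, |(m (k + 1) : ℝ) - m k|) := by
  unfold discreteEnergy
  apply mul_le_mul_of_nonneg_left _ (by positivity)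
  have hshift : ∀ (f : ℕ → ℝ) (M : ℕ), ∑ i ∈ Finset.Icc 1 M, f i = ∑ p ∈ Finset.range M, f (p + 1) := by
    intro f M
    rw [Finset.range_eq_Ico, Finset.sum_Ico_add' f 0 M 1]
    rfl
  have hv : ∑ i ∈ Finset.Icc 1 ((N + 1) ^ 2 - (N + 1)),
      (rowSpin (N + 1) m i - rowSpin (N + 1) m (i + (N + 1))) ^ 2 =
      ∑ k ∈ Finset.range N, |(m (k + 1) : ℝ) - m k| := by
    have : (N + 1) ^ 2 - (N + 1) = N * (N + 1) := by
      have : (N + 1) ^ 2 = N * (N + 1) + (N + 1) := by ring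
      omega
    rw [hshift, this, sum_range_mul_aux]
    refine Finset.sum_congr rfl fun k _ => ?_
    rw [← min_eq_left (hm (k + 1)), ← min_eq_left (hm k), abs_sub_comm, ← sum_vert]
    refine Finset.sum_congr rfl fun j hj => ?_
    rw [Finset.mem_range] at hj
    rw [rowSpin_eq _ _ _ _ hj, show k * (N + 1) + j + 1 + (N + 1) = (k + 1) * (N + 1) + j + 1 by ring,
      rowSpin_eq _ _ _ _ hj]
  have hh : ∑ i ∈ Finset.Icc 1 ((N + 1) ^ 2 - 1),
      (rowSpin (N + 1) m i - rowSpin (N + 1) m (i + 1)) ^ 2 ≤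
      2 * ∑ k ∈ Finset.range (N + 1), mix (N + 1) (m k) + 2 +
        2 * (∑ k ∈ Finset.range N, |(m (k + 1) : ℝ) - m k|) / ((N + 1 : ℕ) : ℝ) := by
    rw [hshift]
    have hle : ∑ p ∈ Finset.range ((N + 1) ^ 2 - 1),
        (rowSpin (N + 1) m (p + 1) - rowSpin (N + 1) m (p + 1 + 1)) ^ 2 ≤
        ∑ p ∈ Finset.range ((N + 1) * (N + 1)),
        (rowSpin (N + 1) m (p + 1) - rowSpin (N + 1) m (p + 1 + 1)) ^ 2 := by
      apply Finset.sum_le_sum_of_subset_of_nonneg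
      · apply Finset.range_mono
        have : (N + 1) ^ 2 = (N + 1) * (N + 1) := by ring
        omega
      · intros; positivity
    refine hle.trans ?_
    rw [sum_range_mul_aux]
    have hrow : ∀ k, ∑ j ∈ Finset.range (N + 1), (rowSpin (N + 1) m (k * (N + 1) + j + 1) -
        rowSpin (N + 1) m (k * (N + 1) + j + 1 + 1)) ^ 2 =
        mix (N + 1) (m k) + (ind (m k) N - ind (m (k + 1)) 0) ^ 2 := by
      intro k
      rw [Finset.sum_range_succ]
      congr 1
      · unfold mix
        rw [← sum_inner_row]
        refine Finset.sum_congr rfl fun j hj => ?_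
        rw [Finset.mem_range] at hj
        rw [rowSpin_eq _ _ _ _ (by omega), show k * (N + 1) + j + 1 + 1 = k * (N + 1) + (j + 1) + 1 by ring,
          rowSpin_eq _ _ _ _ (by omega)]
      · rw [rowSpin_eq _ _ _ _ (by omega), show k * (N + 1) + N + 1 + 1 = (k + 1) * (N + 1) + 0 + 1 by ring,
          rowSpin_eq (N + 1) m (k + 1) 0 (by omega)]
    rw [Finset.sum_congr rfl fun k _ => hrow k, Finset.sum_add_distrib,
      Finset.sum_range_succ (fun k => (ind (m k) N - ind (m (k + 1)) 0) ^ 2)]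
    have hlast : (ind (m N) N - ind (m (N + 1)) 0) ^ 2 ≤ 1 := by
      unfold ind; split_ifs <;> norm_num
    have hcost : ∑ k ∈ Finset.range N, (ind (m k) N - ind (m (k + 1)) 0) ^ 2 ≤
        ∑ k ∈ Finset.range N, (mix (N + 1) (m (k + 1)) + (ind (m (k + 1)) N - ind (m k) N) +
      2 * |(m (k + 1) : ℝ) - m k| / ((N + 1 : ℕ) : ℝ)) :=
      Finset.sum_le_sum fun k _ => cost_le N _ _ (hm k) (hm (k + 1))
    rw [Finset.sum_add_distrib, Finset.sum_add_distrib, Finset.sum_range_sub (fun k => ind (m k) N),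
      ← Finset.sum_div, ← Finset.mul_sum] at hcost
    have hmix : ∑ k ∈ Finset.range N, mix (N + 1) (m (k + 1)) ≤
        ∑ k ∈ Finset.range (N + 1), mix (N + 1) (m k) := by
      rw [Finset.sum_range_succ']
      have : 0 ≤ mix (N + 1) (m 0) := by unfold mix; split_ifs <;> norm_num
      linarith
    have h1 : ind (m N) N - ind (m 0) N ≤ 1 := by
      unfold ind; split_ifs <;> norm_num
    linarith
  rw [hv]
  linarith

lemma integral_floor (t : ℝ) : ∫ θ in (0 : ℝ)..1, ((⌊t + θ⌋ : ℤ) : ℝ) = t := by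
  have h1 : ∫ θ in (0 : ℝ)..1, ((⌊t + θ⌋ : ℤ) : ℝ) = ∫ s in t..t + 1, ((⌊s⌋ : ℤ) : ℝ) := by
    rw [intervalIntegral.integral_comp_add_left (fun s => ((⌊s⌋ : ℤ) : ℝ))]; simp
  have hmono : Monotone (fun s : ℝ => ((⌊s⌋ : ℤ) : ℝ)) := fun a b h =>
    Int.cast_le.mpr (Int.floor_mono h)
  have hii : ∀ a b : ℝ, IntervalIntegrable (fun s : ℝ => ((⌊s⌋ : ℤ) : ℝ)) volume a b :=
    fun a b => hmono.intervalIntegrable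
  have hper : Function.Periodic (fun s : ℝ => s - ((⌊s⌋ : ℤ) : ℝ)) 1 := by
    intro s; simp
  have h2 := hper.intervalIntegral_add_eq t 0
  have hid : ∀ a b : ℝ, IntervalIntegrable (fun s : ℝ => s) volume a b :=
    fun a b => continuous_id.intervalIntegrable a b
  rw [intervalIntegral.integral_sub (hid _ _) (hii _ _),
    intervalIntegral.integral_sub (hid _ _) (hii _ _), integral_id, integral_id] at h2
  have h3 : ∫ s in (0 : ℝ)..(0 + 1), ((⌊s⌋ : ℤ) : ℝ) = 0 := by
    rw [zero_add, intervalIntegral.integral_of_le zero_le_one, integral_Ioc_eq_integral_Ioo]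
    rw [setIntegral_congr_fun (g := fun _ => (0 : ℝ)) measurableSet_Ioo]
    · simp
    · intro s hs
      have : ⌊s⌋ = 0 := Int.floor_eq_zero_iff.mpr ⟨hs.1.le, hs.2⟩
      simp [this]
  rw [h3] at h2
  rw [h1]; nlinarith

lemma exists_theta (w : ℕ → ℝ) (N : ℕ) : ∃ θ ∈ Set.Ioo (0 : ℝ) 1,
    ∑ k ∈ Finset.range N, |((⌊w (k + 1) + θ⌋ : ℤ) : ℝ) - (⌊w k + θ⌋ : ℤ)| ≤
      ∑ k ∈ Finset.range N, |w (k + 1) - w k| := by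
  have hii : ∀ t a b : ℝ, IntervalIntegrable (fun s : ℝ => ((⌊t + s⌋ : ℤ) : ℝ)) volume a b := by
    intro t a b
    have hmono : Monotone (fun s : ℝ => ((⌊t + s⌋ : ℤ) : ℝ)) := fun a b h =>
      Int.cast_le.mpr (Int.floor_mono (by linarith))
    exact hmono.intervalIntegrable
  have hint : ∀ a b : ℝ, ∫ θ in (0 : ℝ)..1, |((⌊b + θ⌋ : ℤ) : ℝ) - (⌊a + θ⌋ : ℤ)| = |b - a| := by
    intro a b
    wlog hab : a ≤ b generalizing a b
    · have := this b a (le_of_not_ge hab)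
      rw [abs_sub_comm b a, ← this]
      simp_rw [abs_sub_comm]
    · have : ∀ θ : ℝ, |((⌊b + θ⌋ : ℤ) : ℝ) - (⌊a + θ⌋ : ℤ)| = ((⌊b + θ⌋ : ℤ) : ℝ) - (⌊a + θ⌋ : ℤ) := by
        intro θ
        apply abs_of_nonneg
        have : ((⌊a + θ⌋ : ℤ) : ℝ) ≤ (⌊b + θ⌋ : ℤ) := Int.cast_le.mpr (Int.floor_mono (by linarith))
        linarith
      simp_rw [this]
      rw [intervalIntegral.integral_sub (hii _ _ _) (hii _ _ _), integral_floor, integral_floor,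
        abs_of_nonneg (by linarith)]
  have hI : IntegrableOn (fun θ => ∑ k ∈ Finset.range N,
      |((⌊w (k + 1) + θ⌋ : ℤ) : ℝ) - (⌊w k + θ⌋ : ℤ)|) (Set.Ioo 0 1) volume := by
    apply integrable_finsetSum
    intro k _
    apply Integrable.abs
    apply Integrable.sub
    · exact ((intervalIntegrable_iff_integrableOn_Ioo_of_le zero_le_one).mp (hii _ 0 1))
    · exact ((intervalIntegrable_iff_integrableOn_Ioo_of_le zero_le_one).mp (hii _ 0 1))
  obtain ⟨θ, hθ, hle⟩ := exists_le_setAverage (by simp) (by simp) hI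
  refine ⟨θ, hθ, hle.trans ?_⟩
  rw [setAverage_eq]
  rw [← integral_Ioc_eq_integral_Ioo, ← intervalIntegral.integral_of_le zero_le_one,
    intervalIntegral.integral_finsetSum]
  · simp [hint]
  · intro k _
    exact ((hii _ 0 1).sub (hii _ 0 1)).abs

lemma exists_sample (u : ℝ → ℝ) (n : ℕ) (hn : 0 < n) (k : ℕ) :
    ∃ x ∈ Set.Ioo ((k : ℝ) / n) ((k + 1 : ℝ) / n), (0 < u x ∧ u x < 1 →
      ∀ y ∈ Set.Ioo ((k : ℝ) / n) ((k + 1 : ℝ) / n), 0 < u y ∧ u y < 1) := by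
  have hn' : (0 : ℝ) < n := by exact_mod_cast hn
  have hlt : (k : ℝ) / n < (k + 1 : ℝ) / n := by
    apply div_lt_div_of_pos_right _ hn'; linarith
  by_cases h : ∀ y ∈ Set.Ioo ((k : ℝ) / n) ((k + 1 : ℝ) / n), 0 < u y ∧ u y < 1
  · obtain ⟨x, hx⟩ := Set.nonempty_Ioo.mpr hlt
    exact ⟨x, hx, fun _ => h⟩
  · push Not at h
    obtain ⟨x, hx, h1⟩ := h
    exact ⟨x, hx, fun h2 => absurd h2.2 (not_lt.mpr (h1 h2.1))⟩

lemma row_sub (N k : ℕ) (hk : k ≤ N) :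
    Set.Ioo ((k : ℝ) / (N + 1 : ℕ)) ((k + 1 : ℝ) / (N + 1 : ℕ)) ⊆ Set.Ioo 0 1 := by
  intro y hy
  have hpos : (0 : ℝ) < ((N + 1 : ℕ) : ℝ) := by positivity
  refine ⟨lt_of_le_of_lt (by positivity) hy.1, lt_of_lt_of_le hy.2 ?_⟩
  rw [div_le_one hpos]
  exact_mod_cast Nat.succ_le_succ hk

lemma mix_count (u : ℝ → ℝ) (N : ℕ) (m : ℕ → ℕ)
    (h : ∀ k ≤ N, 0 < m k → m k < N + 1 →
      ∀ y ∈ Set.Ioo ((k : ℝ) / (N + 1 : ℕ)) ((k + 1 : ℝ) / (N + 1 : ℕ)), 0 < u y ∧ u y < 1) :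
    ENNReal.ofReal ((∑ k ∈ Finset.range (N + 1), mix (N + 1) (m k)) / ((N + 1 : ℕ) : ℝ)) ≤
      volume {x ∈ Set.Ioo (0 : ℝ) 1 | 0 < u x ∧ u x < 1} := by
  have hpos : (0 : ℝ) < ((N + 1 : ℕ) : ℝ) := by positivity
  set T := (Finset.range (N + 1)).filter (fun k => 0 < m k ∧ m k < N + 1) with hT
  have hsum : ∑ k ∈ Finset.range (N + 1), mix (N + 1) (m k) = T.card := by
    unfold mix
    rw [Finset.sum_boole]
  have hdisj : (T : Set ℕ).PairwiseDisjoint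
      (fun k : ℕ => Set.Ioo ((k : ℝ) / (N + 1 : ℕ)) ((k + 1 : ℝ) / (N + 1 : ℕ))) := by
    intro a _ b _ hab
    rw [Function.onFun, Set.disjoint_left]
    intro y hy hy'
    have h1 := hy.1; have h2 := hy.2; have h3 := hy'.1; have h4 := hy'.2
    rw [div_lt_iff₀ hpos] at h1 h3
    rw [lt_div_iff₀ hpos] at h2 h4
    have h5 : (a : ℝ) < b + 1 := by linarith
    have h6 : (b : ℝ) < a + 1 := by linarith
    norm_cast at h5 h6
    omega
  have hU := measure_biUnion_finset (μ := volume) hdisj (fun _ _ => measurableSet_Ioo)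
  have hle : volume (⋃ k ∈ T, Set.Ioo ((k : ℝ) / (N + 1 : ℕ)) ((k + 1 : ℝ) / (N + 1 : ℕ))) ≤
      volume {x ∈ Set.Ioo (0 : ℝ) 1 | 0 < u x ∧ u x < 1} := by
    apply measure_mono
    intro y hy
    simp only [Set.mem_iUnion] at hy
    obtain ⟨k, hk, hy⟩ := hy
    rw [hT, Finset.mem_filter, Finset.mem_range] at hk
    exact ⟨row_sub N k (by omega) hy, h k (by omega) hk.2.1 hk.2.2 y hy⟩
  refine le_trans (le_of_eq ?_) hle
  rw [hU, hsum]
  have : ∀ k ∈ T, volume (Set.Ioo ((k : ℝ) / (N + 1 : ℕ)) ((k + 1 : ℝ) / (N + 1 : ℕ))) =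
      ENNReal.ofReal (1 / ((N + 1 : ℕ) : ℝ)) := by
    intro k _
    rw [Real.volume_Ioo]; congr 1; ring
  rw [Finset.sum_congr rfl this, Finset.sum_const, nsmul_eq_mul, ← ENNReal.ofReal_natCast,
    ← ENNReal.ofReal_mul (by positivity)]
  congr 1; ring

lemma var_le (u : ℝ → ℝ) (N : ℕ) (x : ℕ → ℝ)
    (hx : ∀ k ≤ N, x k ∈ Set.Ioo ((k : ℝ) / (N + 1 : ℕ)) ((k + 1 : ℝ) / (N + 1 : ℕ))) :
    ENNReal.ofReal (∑ k ∈ Finset.range N, |u (x (k + 1)) - u (x k)|) ≤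
      eVariationOn u (Set.Ioo 0 1) := by
  have hpos : (0 : ℝ) < ((N + 1 : ℕ) : ℝ) := by positivity
  have hmono : MonotoneOn x (Set.Iic N) := by
    intro a ha b hb hab
    rcases hab.eq_or_lt with rfl | hlt
    · exact le_rfl
    · have h1 := (hx a ha).2
      have h2 := (hx b hb).1
      have : ((a : ℝ) + 1) / (N + 1 : ℕ) ≤ (b : ℝ) / (N + 1 : ℕ) := by
        apply div_le_div_of_nonneg_right _ hpos.le
        exact_mod_cast hlt
      linarith
  have := eVariationOn.sum_le_of_monotoneOn_Iic (f := u) (s := Set.Ioo 0 1) hmono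
    (fun k hk => row_sub N k hk (hx k hk))
  rw [ENNReal.ofReal_sum_of_nonneg (fun _ _ => abs_nonneg _)]
  simpa [edist_dist, Real.dist_eq] using this

lemma per_n (u : ℝ → ℝ)
    (hrange : ∀ x ∈ Set.Ioo (0 : ℝ) 1, 0 ≤ u x ∧ u x ≤ 1)
    (hbv : BoundedVariationOn u (Set.Ioo 0 1)) (N : ℕ) :
    ∃ x : ℕ → ℝ, ∃ m : ℕ → ℕ,
      (∀ k ≤ N, x k ∈ Set.Ioo ((k : ℝ) / (N + 1 : ℕ)) ((k + 1 : ℝ) / (N + 1 : ℕ))) ∧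
      (∀ k, m k ≤ N + 1) ∧
      (∀ k ≤ N, |(m k : ℝ) / (N + 1 : ℕ) - u (x k)| ≤ 1 / (N + 1 : ℕ)) ∧
      ENNReal.ofReal (discreteEnergy (N + 1) (rowSpin (N + 1) m)) ≤
        2 * volume {x ∈ Set.Ioo (0 : ℝ) 1 | 0 < u x ∧ u x < 1} +
          eVariationOn u (Set.Ioo 0 1) +
          ENNReal.ofReal ((2 + 2 * (eVariationOn u (Set.Ioo 0 1)).toReal) / (N + 1 : ℕ)) := by
  have hpos : (0 : ℝ) < ((N + 1 : ℕ) : ℝ) := by positivity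
  choose x hx hx1 using exists_sample u (N + 1) (Nat.succ_pos N)
  obtain ⟨θ, hθ, hvar⟩ := exists_theta (fun k => ((N + 1 : ℕ) : ℝ) * u (x k)) N
  have hu : ∀ k ≤ N, 0 ≤ u (x k) ∧ u (x k) ≤ 1 := fun k hk => hrange _ (row_sub N k hk (hx k))
  set m : ℕ → ℕ := fun k => min (N + 1) ⌊((N + 1 : ℕ) : ℝ) * u (x k) + θ⌋₊ with hm
  have hmN : ∀ k, m k ≤ N + 1 := fun k => min_le_left _ _
  have hm1 : ∀ k ≤ N, m k = ⌊((N + 1 : ℕ) : ℝ) * u (x k) + θ⌋₊ := by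
    intro k hk
    apply min_eq_right
    rw [← Nat.lt_succ_iff, Nat.floor_lt (add_nonneg (mul_nonneg hpos.le (hu k hk).1) hθ.1.le)]
    have := mul_le_mul_of_nonneg_left (hu k hk).2 hpos.le
    have h2 := hθ.2
    push_cast at this ⊢
    linarith
  have hm2 : ∀ k ≤ N, (m k : ℝ) = ((⌊((N + 1 : ℕ) : ℝ) * u (x k) + θ⌋ : ℤ) : ℝ) := by
    intro k hk
    rw [hm1 k hk]
    exact natCast_floor_eq_intCast_floor (add_nonneg (mul_nonneg hpos.le (hu k hk).1) hθ.1.le)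
  refine ⟨x, m, fun k _ => hx k, hmN, ?_, ?_⟩
  · intro k hk
    have h1 := Int.floor_le (((N + 1 : ℕ) : ℝ) * u (x k) + θ)
    have h2 := Int.lt_floor_add_one (((N + 1 : ℕ) : ℝ) * u (x k) + θ)
    rw [← hm2 k hk] at h1 h2
    have : (m k : ℝ) / (N + 1 : ℕ) - u (x k) = ((m k : ℝ) - (N + 1 : ℕ) * u (x k)) / (N + 1 : ℕ) := by
      field_simp
    rw [this, abs_div, abs_of_pos hpos]
    apply div_le_div_of_nonneg_right _ hpos.le
    rw [abs_le]
    constructor <;> linarith [hθ.1, hθ.2]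
  · have hmix := mix_count u N m (by
      intro k hk h1 h2
      apply hx1 k
      rw [hm1 k hk] at h1 h2
      refine ⟨lt_of_le_of_ne (hu k hk).1 ?_, lt_of_le_of_ne (hu k hk).2 ?_⟩
      · intro h0
        rw [← h0, mul_zero, zero_add, Nat.floor_eq_zero.mpr hθ.2] at h1
        exact lt_irrefl _ h1
      · intro h0
        rw [h0, mul_one, Nat.floor_lt (by linarith [hθ.1])] at h2
        linarith [hθ.1])
    have hV := var_le u N x (fun k _ => hx k)
    set V' := ∑ k ∈ Finset.range N, |u (x (k + 1)) - u (x k)| with hV'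
    have hV'0 : 0 ≤ V' := Finset.sum_nonneg fun _ _ => abs_nonneg _
    have hS : ∑ k ∈ Finset.range N, |(m (k + 1) : ℝ) - m k| ≤ ((N + 1 : ℕ) : ℝ) * V' := by
      have e1 : ∑ k ∈ Finset.range N, |(m (k + 1) : ℝ) - m k| =
          ∑ k ∈ Finset.range N, |((⌊((N + 1 : ℕ) : ℝ) * u (x (k + 1)) + θ⌋ : ℤ) : ℝ) -
            (⌊((N + 1 : ℕ) : ℝ) * u (x k) + θ⌋ : ℤ)| := by
        refine Finset.sum_congr rfl fun k hk => ?_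
        rw [Finset.mem_range] at hk
        rw [hm2 k (by omega), hm2 (k + 1) (by omega)]
      rw [e1]
      refine hvar.trans (le_of_eq ?_)
      rw [hV', Finset.mul_sum]
      refine Finset.sum_congr rfl fun k hk => ?_
      rw [← mul_sub, abs_mul, abs_of_pos hpos]
    have hE := energy_le N m hmN
    set S := ∑ k ∈ Finset.range N, |(m (k + 1) : ℝ) - m k| with hSdef
    set Q := ∑ k ∈ Finset.range (N + 1), mix (N + 1) (m k) with hQ
    have hQ0 : 0 ≤ Q := Finset.sum_nonneg fun _ _ => by unfold mix; split_ifs <;> norm_num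
    have hVV : V' ≤ (eVariationOn u (Set.Ioo 0 1)).toReal :=
      (ENNReal.ofReal_le_iff_le_toReal hbv).mp hV
    have hSn : S / ((N + 1 : ℕ) : ℝ) ≤ V' := by
      rw [div_le_iff₀ hpos]; linarith
    have hE2 : discreteEnergy (N + 1) (rowSpin (N + 1) m) ≤
        2 * (Q / (N + 1 : ℕ)) + V' +
          (2 + 2 * (eVariationOn u (Set.Ioo 0 1)).toReal) / (N + 1 : ℕ) := by
      refine hE.trans ?_
      have : (1 / ((N + 1 : ℕ) : ℝ)) * (2 * Q + 2 + 2 * S / ((N + 1 : ℕ) : ℝ) + S) =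
          2 * (Q / (N + 1 : ℕ)) + S / (N + 1 : ℕ) + (2 + 2 * (S / (N + 1 : ℕ))) / (N + 1 : ℕ) := by
        field_simp; ring
      rw [this]
      gcongr
      exact hSn.trans hVV
    refine (ENNReal.ofReal_le_ofReal hE2).trans ?_
    rw [ENNReal.ofReal_add (by positivity) (by positivity),
      ENNReal.ofReal_add (by positivity) (by positivity),
      ENNReal.ofReal_mul (by norm_num), ENNReal.ofReal_ofNat]
    gcongr

/-- piecewise constant sampling of `u` -/
def sampFun (u : ℝ → ℝ) (n : ℕ) (x : ℕ → ℝ) (y : ℝ) : ℝ := u (x (⌈(n : ℝ) * y⌉₊ - 1))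

lemma measurable_sampFun (u : ℝ → ℝ) (n : ℕ) (x : ℕ → ℝ) : Measurable (sampFun u n x) := by
  have h1 : Measurable (fun y : ℝ => ⌈(n : ℝ) * y⌉₊) :=
    Nat.measurable_ceil.comp (measurable_const.mul measurable_id)
  have h2 : Measurable (fun j : ℕ => u (x (j - 1))) := measurable_from_top
  exact h2.comp h1

lemma measurable_stepFun (n : ℕ) (v : ℕ → ℝ) : Measurable (stepFun n v) := by
  have h1 : Measurable (fun y : ℝ => ⌈(n : ℝ) ^ 2 * y⌉) :=
    Int.measurable_ceil.comp (measurable_const.mul measurable_id)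
  have h2 : Measurable (fun j : ℤ => v j.toNat) := measurable_from_top
  exact h2.comp h1

lemma ceil_row (n : ℕ) (hn : 0 < n) (k : ℕ) (y : ℝ)
    (hy : y ∈ Set.Ioc ((k : ℝ) / n) ((k + 1 : ℝ) / n)) : ⌈(n : ℝ) * y⌉₊ = k + 1 := by
  have hpos : (0 : ℝ) < n := by exact_mod_cast hn
  rw [Nat.ceil_eq_iff (by omega)]
  have h1 := hy.1
  have h2 := hy.2
  rw [div_lt_iff₀ hpos] at h1
  rw [le_div_iff₀ hpos] at h2
  rw [Nat.add_sub_cancel]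
  push_cast
  constructor
  · linarith
  · linarith

lemma exists_row (N : ℕ) (y : ℝ) (hy : y ∈ Set.Ioo (0 : ℝ) 1) :
    ∃ k ≤ N, y ∈ Set.Ioc ((k : ℝ) / (N + 1 : ℕ)) ((k + 1 : ℝ) / (N + 1 : ℕ)) := by
  have hpos : (0 : ℝ) < ((N + 1 : ℕ) : ℝ) := by positivity
  have h0 : 0 < ⌈((N + 1 : ℕ) : ℝ) * y⌉₊ := Nat.ceil_pos.mpr (mul_pos hpos hy.1)
  have h1 : ⌈((N + 1 : ℕ) : ℝ) * y⌉₊ ≤ N + 1 := by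
    apply Nat.ceil_le.mpr
    nlinarith [hy.2]
  obtain ⟨k, hk⟩ := Nat.exists_eq_succ_of_ne_zero h0.ne'
  rw [Nat.succ_eq_add_one] at hk
  refine ⟨k, by omega, ?_⟩
  rw [Nat.ceil_eq_iff (by omega)] at hk
  obtain ⟨h2, h3⟩ := hk
  rw [Nat.add_sub_cancel] at h2
  rw [Set.mem_Ioc, div_lt_iff₀ hpos, le_div_iff₀ hpos]
  push_cast at *
  constructor <;> linarith

lemma stepFun_row (N k : ℕ) (m : ℕ → ℕ) (y : ℝ)
    (hy : y ∈ Set.Ioc ((k : ℝ) / (N + 1 : ℕ)) ((k + 1 : ℝ) / (N + 1 : ℕ))) :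
    stepFun (N + 1) (rowSpin (N + 1) m) y =
      if y ≤ (k : ℝ) / (N + 1 : ℕ) + (m k : ℝ) / (N + 1 : ℕ) ^ 2 then 1 else 0 := by
  have hpos : (0 : ℝ) < ((N + 1 : ℕ) : ℝ) := by positivity
  have h1 := hy.1
  have h2 := hy.2
  rw [div_lt_iff₀ hpos] at h1
  rw [le_div_iff₀ hpos] at h2
  set i := ⌈((N + 1 : ℕ) : ℝ) ^ 2 * y⌉ with hi
  have h3 : ((k * (N + 1) : ℕ) : ℤ) < i := by
    rw [hi, Int.lt_ceil]; push_cast at *; nlinarith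
  have h4 : i ≤ (((k + 1) * (N + 1) : ℕ) : ℤ) := by
    rw [hi, Int.ceil_le]; push_cast at *; nlinarith
  obtain ⟨j, hj⟩ : ∃ j : ℕ, i = ((k * (N + 1) + j + 1 : ℕ) : ℤ) := by
    refine ⟨(i - (k * (N + 1) : ℕ) - 1).toNat, ?_⟩
    push_cast at *
    omega
  have hjN : j < N + 1 := by
    rw [hj] at h4
    have : k * (N + 1) + j + 1 ≤ (k + 1) * (N + 1) := by exact_mod_cast h4
    rw [Nat.succ_mul] at this
    omega
  unfold stepFun
  rw [← hi, hj, Int.toNat_natCast, rowSpin_eq _ _ _ _ hjN]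
  unfold ind
  have hiff : j < m k ↔ y ≤ (k : ℝ) / (N + 1 : ℕ) + (m k : ℝ) / (N + 1 : ℕ) ^ 2 := by
    have e1 : j < m k ↔ i ≤ ((k * (N + 1) + m k : ℕ) : ℤ) := by
      rw [hj, Int.ofNat_le]; omega
    rw [e1, hi, Int.ceil_le]
    have e2 : (k : ℝ) / (N + 1 : ℕ) + (m k : ℝ) / (N + 1 : ℕ) ^ 2 =
        ((k * (N + 1) + m k : ℕ) : ℝ) / (N + 1 : ℕ) ^ 2 := by
      push_cast; field_simp
    rw [e2, le_div_iff₀ (by positivity), mul_comm y]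
    push_cast
    rfl
  simp only [hiff]

lemma integral_step (a b d : ℝ) (h1 : a ≤ d) (h2 : d ≤ b) :
    ∫ y in Set.Ioc a b, (if y ≤ d then (1 : ℝ) else 0) = d - a := by
  have : (fun y : ℝ => if y ≤ d then (1 : ℝ) else 0) = (Set.Iic d).indicator (fun _ => 1) := by
    ext y; simp [Set.indicator]
  rw [this, integral_indicator measurableSet_Iic, Measure.restrict_restrict measurableSet_Iic]
  have : Set.Iic d ∩ Set.Ioc a b = Set.Ioc a d := by
    ext y; simp only [Set.mem_inter_iff, Set.mem_Iic, Set.mem_Ioc]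
    constructor
    · rintro ⟨h, h', _⟩; exact ⟨h', h⟩
    · rintro ⟨h, h'⟩; exact ⟨h', h, h'.trans h2⟩
  rw [this]
  simp [h1]

lemma row_bound (u : ℝ → ℝ) (N k : ℕ) (hk : k ≤ N) (x : ℕ → ℝ) (m : ℕ → ℕ) (hm : m k ≤ N + 1)
    (hux : 0 ≤ u (x k) ∧ u (x k) ≤ 1)
    (happ : |(m k : ℝ) / (N + 1 : ℕ) - u (x k)| ≤ 1 / (N + 1 : ℕ))
    (G : ℝ → ℝ) (hG : Continuous G) (C ω c : ℝ) (hC : |c| ≤ C)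
    (hω : ∀ y ∈ Set.Ioc ((k : ℝ) / (N + 1 : ℕ)) ((k + 1 : ℝ) / (N + 1 : ℕ)), |G y - c| ≤ ω) :
    |∫ y in Set.Ioc ((k : ℝ) / (N + 1 : ℕ)) ((k + 1 : ℝ) / (N + 1 : ℕ)),
      (stepFun (N + 1) (rowSpin (N + 1) m) y - sampFun u (N + 1) x y) * G y| ≤
      (ω + C / (N + 1 : ℕ)) / (N + 1 : ℕ) := by
  have hpos : (0 : ℝ) < ((N + 1 : ℕ) : ℝ) := by positivity
  set n : ℝ := ((N + 1 : ℕ) : ℝ) with hn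
  set a := (k : ℝ) / n with ha
  set b := (k + 1 : ℝ) / n with hb
  have hab : b - a = 1 / n := by rw [ha, hb]; ring
  have hab' : a ≤ b := by have : 0 < 1 / n := by positivity
                          linarith
  set d := a + (m k : ℝ) / n ^ 2 with hd
  have hdb : d ≤ b := by
    have : (m k : ℝ) / n ^ 2 ≤ 1 / n := by
      rw [div_le_div_iff₀ (by positivity) hpos]
      have : (m k : ℝ) ≤ n := by rw [hn]; exact_mod_cast hm
      nlinarith
    linarith
  have had : a ≤ d := by have : 0 ≤ (m k : ℝ) / n ^ 2 := by positivity
                         linarith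
  set w := u (x k) with hw
  let D : ℝ → ℝ := fun y => (if y ≤ d then (1 : ℝ) else 0) - w
  have hDm : Measurable D :=
    (Measurable.ite measurableSet_Iic measurable_const measurable_const).sub measurable_const
  have hD1 : ∀ y, |D y| ≤ 1 := by
    intro y
    simp only [D]
    rw [abs_le]
    split_ifs <;> constructor <;> linarith [hux.1, hux.2]
  have hcongr : ∫ y in Set.Ioc a b,
      (stepFun (N + 1) (rowSpin (N + 1) m) y - sampFun u (N + 1) x y) * G y =
      ∫ y in Set.Ioc a b, (D y * (G y - c) + c * D y) := by
    apply setIntegral_congr_fun measurableSet_Ioc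
    intro y hy
    simp only [D]
    rw [stepFun_row N k m y hy]
    unfold sampFun
    rw [ceil_row (N + 1) (Nat.succ_pos N) k y hy, Nat.add_sub_cancel]
    ring
  have hGi : IntegrableOn (fun y => G y - c) (Set.Ioc a b) volume :=
    ((hG.sub continuous_const).integrableOn_Icc).mono_set Set.Ioc_subset_Icc_self
  have hDi : IntegrableOn D (Set.Ioc a b) volume := by
    apply Measure.integrableOn_of_bounded (M := 1) (by simp) hDm.aestronglyMeasurable
    exact Filter.Eventually.of_forall hD1
  have hDG : IntegrableOn (fun y => D y * (G y - c)) (Set.Ioc a b) volume :=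
    hGi.bdd_mul hDm.aestronglyMeasurable (Filter.Eventually.of_forall hD1)
  rw [hcongr, integral_add hDG (hDi.const_mul c), integral_const_mul]
  have hvol : volume.real (Set.Ioc a b) = 1 / n := by
    rw [Real.volume_real_Ioc_of_le hab', hab]
  have hA : |∫ y in Set.Ioc a b, D y * (G y - c)| ≤ ω * (1 / n) := by
    rw [← hvol]
    rw [← Real.norm_eq_abs]
    refine norm_setIntegral_le_of_norm_le_const (μ := volume) (s := Set.Ioc a b)
      (f := fun y => D y * (G y - c)) (by simp) ?_
    intro y hy
    rw [norm_mul]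
    calc ‖D y‖ * ‖G y - c‖ ≤ 1 * ‖G y - c‖ := by gcongr; exact hD1 y
      _ ≤ ω := by rw [one_mul]; exact hω y hy
  have hB : ∫ y in Set.Ioc a b, D y = (1 / n) * ((m k : ℝ) / n - w) := by
    simp only [D]
    rw [integral_sub, integral_step a b d had hdb, setIntegral_const, hvol, hd, smul_eq_mul]
    · field_simp; ring
    · have : IntegrableOn (fun y => D y + w) (Set.Ioc a b) volume := hDi.add (by simp)
      have h' := this.integrable; simpa [D] using h'
    · simp
  have hC0 : 0 ≤ C := (abs_nonneg c).trans hC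
  calc _ ≤ |∫ y in Set.Ioc a b, D y * (G y - c)| + |c * ∫ y in Set.Ioc a b, D y| := abs_add_le _ _
    _ ≤ ω * (1 / n) + C * ((1 / n) * (1 / n)) := by
      rw [hB, abs_mul, abs_mul, abs_of_pos (show 0 < 1 / n by positivity)]
      gcongr
    _ = (ω + C / n) / n := by field_simp

lemma total_bound (u : ℝ → ℝ) (N : ℕ) (x : ℕ → ℝ) (m : ℕ → ℕ) (hm : ∀ k, m k ≤ N + 1)
    (hux : ∀ k ≤ N, 0 ≤ u (x k) ∧ u (x k) ≤ 1)
    (happ : ∀ k ≤ N, |(m k : ℝ) / (N + 1 : ℕ) - u (x k)| ≤ 1 / (N + 1 : ℕ))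
    (G : ℝ → ℝ) (hG : Continuous G) (C ω : ℝ) (hC : ∀ y, |G y| ≤ C)
    (hω : ∀ y z : ℝ, |y - z| ≤ 1 / (N + 1 : ℕ) → |G y - G z| ≤ ω)
    (hd : ∀ y ∈ Set.Ioo (0 : ℝ) 1,
      |stepFun (N + 1) (rowSpin (N + 1) m) y - sampFun u (N + 1) x y| ≤ 1) :
    |∫ y in Set.Ioo (0 : ℝ) 1,
      (stepFun (N + 1) (rowSpin (N + 1) m) y - sampFun u (N + 1) x y) * G y| ≤
      ω + C / (N + 1 : ℕ) := by
  have hpos : (0 : ℝ) < ((N + 1 : ℕ) : ℝ) := by positivity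
  set F : ℝ → ℝ := fun y =>
    (stepFun (N + 1) (rowSpin (N + 1) m) y - sampFun u (N + 1) x y) * G y with hF
  have hFi : IntegrableOn F (Set.Ioc 0 1) volume := by
    rw [integrableOn_Ioc_iff_integrableOn_Ioo]
    apply Integrable.bdd_mul (c := 1)
    · exact (hG.integrableOn_Icc (a := 0) (b := 1)).mono_set Set.Ioo_subset_Icc_self
    · exact ((measurable_stepFun _ _).sub (measurable_sampFun _ _ _)).aestronglyMeasurable
    · exact (ae_restrict_mem measurableSet_Ioo).mono hd
  have hle : ∀ k : ℕ, (k : ℝ) / (N + 1 : ℕ) ≤ ((k + 1 : ℕ) : ℝ) / (N + 1 : ℕ) := by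
    intro k
    apply div_le_div_of_nonneg_right _ hpos.le
    push_cast; linarith
  have hsub : ∀ k < N + 1, Set.Ioc ((k : ℝ) / (N + 1 : ℕ)) (((k + 1 : ℕ) : ℝ) / (N + 1 : ℕ)) ⊆
      Set.Ioc 0 1 := by
    intro k hk
    apply Set.Ioc_subset_Ioc (by positivity)
    rw [div_le_one hpos]
    exact_mod_cast hk
  have hsum := intervalIntegral.sum_integral_adjacent_intervals (f := F) (μ := volume)
    (a := fun k : ℕ => (k : ℝ) / (N + 1 : ℕ)) (n := N + 1) (fun k hk => by
      rw [intervalIntegrable_iff_integrableOn_Ioc_of_le (hle k)]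
      exact hFi.mono_set (hsub k hk))
  rw [← integral_Ioc_eq_integral_Ioo, ← intervalIntegral.integral_of_le zero_le_one]
  rw [div_self hpos.ne', Nat.cast_zero, zero_div] at hsum
  rw [← hsum]
  refine (Finset.abs_sum_le_sum_abs _ _).trans ?_
  have hrow : ∀ k ∈ Finset.range (N + 1),
      |∫ y in ((k : ℝ) / (N + 1 : ℕ))..(((k + 1 : ℕ) : ℝ) / (N + 1 : ℕ)), F y| ≤
      (ω + C / (N + 1 : ℕ)) / (N + 1 : ℕ) := by
    intro k hk
    rw [Finset.mem_range] at hk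
    rw [intervalIntegral.integral_of_le (hle k)]
    rw [show ((k + 1 : ℕ) : ℝ) = (k : ℝ) + 1 from Nat.cast_succ k]
    apply row_bound u N k (by omega) x m (hm k) (hux k (by omega)) (happ k (by omega)) G hG C ω
      (G ((k : ℝ) / (N + 1 : ℕ))) (hC _)
    intro y hy
    apply hω
    have h1 := hy.1
    have h2 := hy.2
    rw [add_div] at h2
    rw [abs_le]
    constructor
    · have : 0 < 1 / ((N + 1 : ℕ) : ℝ) := by positivity
      linarith
    · linarith
  refine (Finset.sum_le_sum hrow).trans (le_of_eq ?_)
  rw [Finset.sum_const, Finset.card_range, nsmul_eq_mul]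
  field_simp

lemma weak_conv (u : ℝ → ℝ)
    (hrange : ∀ x ∈ Set.Ioo (0 : ℝ) 1, 0 ≤ u x ∧ u x ≤ 1)
    (hbv : BoundedVariationOn u (Set.Ioo 0 1)) (X : ℕ → ℕ → ℝ) (M : ℕ → ℕ → ℕ)
    (hX : ∀ N : ℕ, ∀ k : ℕ, k ≤ N → X N k ∈ Set.Ioo ((k : ℝ) / (N + 1 : ℕ)) ((k + 1 : ℝ) / (N + 1 : ℕ)))
    (hM : ∀ N k, M N k ≤ N + 1)
    (happ : ∀ N, ∀ k ≤ N, |(M N k : ℝ) / (N + 1 : ℕ) - u (X N k)| ≤ 1 / (N + 1 : ℕ))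
    (g : ℝ → ℝ) (hg : IntegrableOn g (Set.Ioo 0 1) volume) :
    Tendsto (fun N => ∫ y in Set.Ioo (0 : ℝ) 1,
      stepFun (N + 1) (rowSpin (N + 1) (M N)) y * g y) atTop
      (nhds (∫ y in Set.Ioo (0 : ℝ) 1, u y * g y)) := by
  have hux : ∀ N, ∀ k ≤ N, 0 ≤ u (X N k) ∧ u (X N k) ≤ 1 :=
    fun N k hk => hrange _ (row_sub N k hk (hX N k hk))
  have hinv : Tendsto (fun N : ℕ => 1 / ((N + 1 : ℕ) : ℝ)) atTop (nhds 0) := by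
    have := tendsto_one_div_add_atTop_nhds_zero_nat (𝕜 := ℝ)
    simpa using this
  set V : ℕ → ℝ → ℝ := fun N => stepFun (N + 1) (rowSpin (N + 1) (M N)) with hV
  set W : ℕ → ℝ → ℝ := fun N => sampFun u (N + 1) (X N) with hW
  have hW01 : ∀ N, ∀ y ∈ Set.Ioo (0 : ℝ) 1, 0 ≤ W N y ∧ W N y ≤ 1 := by
    intro N y hy
    obtain ⟨k, hk, hyk⟩ := exists_row N y hy
    simp only [hW, sampFun]
    rw [ceil_row (N + 1) (Nat.succ_pos N) k y hyk, Nat.add_sub_cancel]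
    exact hux N k hk
  have hV01 : ∀ N y, V N y = 0 ∨ V N y = 1 := fun N y => ind_zero_one _ _
  have hd : ∀ N, ∀ y ∈ Set.Ioo (0 : ℝ) 1, |V N y - W N y| ≤ 1 := by
    intro N y hy
    obtain ⟨h1, h2⟩ := hW01 N y hy
    rw [abs_le]
    rcases hV01 N y with h | h <;> rw [h] <;> constructor <;> linarith
  have hVm : ∀ N, Measurable (V N) := fun N => measurable_stepFun _ _
  have hWm : ∀ N, Measurable (W N) := fun N => measurable_sampFun _ _ _
  -- sampled functions converge
  have hWlim : Tendsto (fun N => ∫ y in Set.Ioo (0 : ℝ) 1, W N y * g y) atTop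
      (nhds (∫ y in Set.Ioo (0 : ℝ) 1, u y * g y)) := by
    apply tendsto_integral_of_dominated_convergence (fun y => |g y|)
    · intro N
      exact (hWm N).aestronglyMeasurable.mul hg.aestronglyMeasurable
    · exact hg.abs
    · intro N
      filter_upwards [ae_restrict_mem measurableSet_Ioo] with y hy
      rw [norm_mul]
      obtain ⟨h1, h2⟩ := hW01 N y hy
      have : ‖W N y‖ ≤ 1 := by rw [Real.norm_eq_abs, abs_le]; constructor <;> linarith
      calc ‖W N y‖ * ‖g y‖ ≤ 1 * ‖g y‖ := by gcongr
        _ = |g y| := by rw [one_mul, Real.norm_eq_abs]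
    · have hdiff := hbv.locallyBoundedVariationOn.ae_differentiableWithinAt measurableSet_Ioo
      filter_upwards [hdiff, ae_restrict_mem measurableSet_Ioo] with y hyd hy
      apply Tendsto.mul_const
      have hc : ContinuousAt u y :=
        hyd.continuousWithinAt.continuousAt (isOpen_Ioo.mem_nhds hy)
      refine hc.tendsto.comp (g := u) (f := fun N => X N (⌈((N + 1 : ℕ) : ℝ) * y⌉₊ - 1)) ?_
      rw [tendsto_iff_dist_tendsto_zero]
      refine squeeze_zero (fun _ => dist_nonneg) (fun N => ?_) hinv
      obtain ⟨k, hk, hyk⟩ := exists_row N y hy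
      rw [ceil_row (N + 1) (Nat.succ_pos N) k y hyk, Nat.add_sub_cancel, Real.dist_eq, abs_le]
      have h1 := hX N k hk
      have h2 := h1.1
      have h3 := h1.2
      have h4 := hyk.1
      have h5 := hyk.2
      rw [add_div] at h3 h5
      constructor <;> linarith
  -- the difference converges weakly to zero
  have hDi : ∀ N, ∀ f : ℝ → ℝ, IntegrableOn f (Set.Ioo 0 1) volume →
      IntegrableOn (fun y => (V N y - W N y) * f y) (Set.Ioo 0 1) volume := by
    intro N f hf
    apply Integrable.bdd_mul (c := 1) hf
    · exact ((hVm N).sub (hWm N)).aestronglyMeasurable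
    · exact (ae_restrict_mem measurableSet_Ioo).mono (hd N)
  have hDlim : Tendsto (fun N => ∫ y in Set.Ioo (0 : ℝ) 1, (V N y - W N y) * g y) atTop
      (nhds 0) := by
    rw [Metric.tendsto_atTop]
    intro ε hε
    obtain ⟨G, hGs, hGg, hGc, hGi⟩ :=
      Integrable.exists_hasCompactSupport_integral_sub_le hg (show 0 < ε / 4 by positivity)
    obtain ⟨C, hC⟩ := hGc.bounded_above_of_compact_support hGs
    have hUC := hGs.uniformContinuous_of_continuous hGc
    rw [Metric.uniformContinuous_iff] at hUC
    obtain ⟨δ, hδ, hUC⟩ := hUC (ε / 4) (by positivity)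
    have hev1 : ∀ᶠ N : ℕ in atTop, 1 / ((N + 1 : ℕ) : ℝ) < δ := hinv.eventually_lt_const hδ
    have hev2 : ∀ᶠ N : ℕ in atTop, C * (1 / ((N + 1 : ℕ) : ℝ)) < ε / 4 := by
      have := hinv.const_mul C
      rw [mul_zero] at this
      exact this.eventually_lt_const (by positivity)
    obtain ⟨N0, hN0⟩ := eventually_atTop.mp (hev1.and hev2)
    refine ⟨N0, fun N hN => ?_⟩
    obtain ⟨h1, h2⟩ := hN0 N hN
    have hb := total_bound u N (X N) (M N) (hM N) (hux N) (happ N) G hGc C (ε / 4) hC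
      (fun y z hyz => by
        have := hUC (a := y) (b := z) (by rw [Real.dist_eq]; exact lt_of_le_of_lt hyz h1)
        rw [Real.dist_eq] at this
        exact this.le) (hd N)
    rw [Real.dist_eq, sub_zero]
    have hsplit : ∫ y in Set.Ioo (0 : ℝ) 1, (V N y - W N y) * g y =
        (∫ y in Set.Ioo (0 : ℝ) 1, (V N y - W N y) * (g y - G y)) +
        ∫ y in Set.Ioo (0 : ℝ) 1, (V N y - W N y) * G y := by
      rw [← integral_add (hDi N (fun y => g y - G y) (hg.sub hGi)) (hDi N G hGi)]
      congr 1; ext y; ring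
    have hfirst : |∫ y in Set.Ioo (0 : ℝ) 1, (V N y - W N y) * (g y - G y)| ≤ ε / 4 := by
      refine le_trans ?_ hGg
      rw [← Real.norm_eq_abs]
      have hn : Integrable (fun y => ‖g y - G y‖) (volume.restrict (Set.Ioo 0 1)) :=
        (hg.sub hGi).norm
      refine norm_integral_le_of_norm_le hn ?_
      filter_upwards [ae_restrict_mem measurableSet_Ioo] with y hy
      rw [norm_mul]
      calc ‖V N y - W N y‖ * ‖g y - G y‖ ≤ 1 * ‖g y - G y‖ := by gcongr; exact hd N y hy
        _ = _ := one_mul _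
    rw [hsplit]
    refine lt_of_le_of_lt (abs_add_le _ _) ?_
    have h3 : C / ((N + 1 : ℕ) : ℝ) = C * (1 / ((N + 1 : ℕ) : ℝ)) := by ring
    rw [h3] at hb
    have hb' : |∫ y in Set.Ioo (0 : ℝ) 1, (V N y - W N y) * G y| ≤
      ε / 4 + C * (1 / ((N + 1 : ℕ) : ℝ)) := hb
    linarith
  have hsum := hDlim.add hWlim
  rw [zero_add] at hsum
  refine hsum.congr fun N => ?_
  have hWi : IntegrableOn (fun y => W N y * g y) (Set.Ioo 0 1) volume := by
    apply Integrable.bdd_mul (c := 1) hg (hWm N).aestronglyMeasurable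
    filter_upwards [ae_restrict_mem measurableSet_Ioo] with y hy
    obtain ⟨h1, h2⟩ := hW01 N y hy
    rw [Real.norm_eq_abs, abs_le]; constructor <;> linarith
  rw [← integral_add (hDi N g hg) hWi]
  congr 1; ext y; ring

/-- Upper bound (recovery sequence) for the one-dimensional spin energy with nearest and
`n`-th neighbour interactions. -/
theorem limsup_upper_bound
    (u : ℝ → ℝ)
    (hrange : ∀ x ∈ Set.Ioo (0 : ℝ) 1, 0 ≤ u x ∧ u x ≤ 1)
    (hbv : BoundedVariationOn u (Set.Ioo 0 1)) :
    ∃ v : ℕ → ℕ → ℝ,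
      (∀ n, 2 ≤ n → ∀ i ∈ Finset.Icc 1 (n ^ 2), v n i = 0 ∨ v n i = 1) ∧
      WeakStarTo (Set.Ioo 0 1) (fun n => stepFun n (v n)) u ∧
      Filter.limsup (fun n => ENNReal.ofReal (discreteEnergy n (v n))) atTop ≤
        2 * volume {x ∈ Set.Ioo (0 : ℝ) 1 | 0 < u x ∧ u x < 1} +
          eVariationOn u (Set.Ioo 0 1) := by
  choose X M hX hM happ hE using per_n u hrange hbv
  refine ⟨fun n => rowSpin n (M (n - 1)), fun n _ i _ => ind_zero_one _ _, ?_, ?_⟩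
  · intro g hg
    rw [← tendsto_add_atTop_iff_nat 1]
    exact weak_conv u hrange hbv X M hX hM happ g hg
  · set B := 2 * volume {x ∈ Set.Ioo (0 : ℝ) 1 | 0 < u x ∧ u x < 1} +
          eVariationOn u (Set.Ioo 0 1) with hB
    set K := 2 + 2 * (eVariationOn u (Set.Ioo 0 1)).toReal with hK
    have hlim : Tendsto (fun n : ℕ => B + ENNReal.ofReal (K / (n : ℝ))) atTop (nhds B) := by
      have h1 : Tendsto (fun n : ℕ => ENNReal.ofReal (K / (n : ℝ))) atTop (nhds 0) := by
        have := ENNReal.tendsto_ofReal (tendsto_const_div_atTop_nhds_zero_nat K)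
        rwa [ENNReal.ofReal_zero] at this
      have := (tendsto_const_nhds (x := B)).add h1
      rwa [add_zero] at this
    rw [← hlim.limsup_eq]
    refine Filter.limsup_le_limsup ?_
    filter_upwards [eventually_ge_atTop 1] with n hn
    obtain ⟨N, rfl⟩ := Nat.exists_eq_succ_of_ne_zero (by omega : n ≠ 0)
    exact hE N
end
end

section
/- Value of the volume-constrained minimum problem for the limit functional: Let L > 0 and σ ∈ (0,1/2]. Then min{2L, 1, 2√(2σL)} is the least element of the set of values F^L(v) = 2·λ({x ∈ (0,L) : 0 < v(x) < 1}) + Var(v;(0,L)) as v ranges over Adm(L,σ); that is, every v ∈ Adm(L,σ) satisfies F^L(v) ≥ min{2L, 1, 2√(2σL)}, and some v ∈ Adm(L,σ) attains this value. -/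
open MeasureTheory Filter Set

noncomputable section

/-- `Adm L σ v` : `v` is admissible, i.e. `0 ≤ v ≤ 1` on `(0,L)`, `v` has finite pointwise
total variation on `(0,L)` and `∫_{(0,L)} v = σL`. -/
def Adm (L σ : ℝ) (v : ℝ → ℝ) : Prop :=
  (∀ x ∈ Set.Ioo 0 L, 0 ≤ v x ∧ v x ≤ 1) ∧
  BoundedVariationOn v (Set.Ioo 0 L) ∧
  (∫ x in Set.Ioo 0 L, v x) = σ * L

/-- The limit functional `F^L(v) = 2·λ({x ∈ (0,L) : 0 < v(x) < 1}) + Var(v;(0,L))`. -/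
def limitF (L : ℝ) (v : ℝ → ℝ) : ℝ :=
  2 * (volume {x ∈ Set.Ioo 0 L | 0 < v x ∧ v x < 1}).toReal +
    (eVariationOn v (Set.Ioo 0 L)).toReal

lemma aux_bound (L V : ℝ) (hV : 0 ≤ V) (w : ℝ → ℝ) (T : Set ℝ) (hT : T ⊆ Set.Ioo 0 L)
    (hi : IntegrableOn w (Set.Ioo 0 L)) (h1 : ∀ x ∈ Set.Ioo 0 L, w x ≤ V)
    (h2 : ∀ x ∈ Set.Ioo 0 L, x ∉ T → w x ≤ 0) :
    ∫ x in Set.Ioo 0 L, w x ≤ V * (volume T).toReal := by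
  have hfin : volume T ≠ ⊤ := ne_top_of_le_ne_top (by simp) (measure_mono hT)
  have hm : MeasurableSet (toMeasurable volume T) := measurableSet_toMeasurable _ _
  have hfin' : volume (toMeasurable volume T) ≠ ⊤ := by rwa [measure_toMeasurable]
  have hint : Integrable ((toMeasurable volume T).indicator (fun _ : ℝ => V)) volume :=
    (integrable_indicator_iff hm).2 (integrableOn_const hfin')
  have hnn : ∀ x, 0 ≤ (toMeasurable volume T).indicator (fun _ : ℝ => V) x :=
    fun x => Set.indicator_nonneg (fun _ _ => hV) x
  calc ∫ x in Set.Ioo 0 L, w x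
      ≤ ∫ x in Set.Ioo 0 L, (toMeasurable volume T).indicator (fun _ : ℝ => V) x := by
        refine setIntegral_mono_on hi hint.integrableOn measurableSet_Ioo ?_
        intro x hx
        by_cases hxT : x ∈ T
        · rw [Set.indicator_of_mem (subset_toMeasurable _ _ hxT)]; exact h1 x hx
        · exact (h2 x hx hxT).trans (hnn x)
    _ ≤ ∫ x, (toMeasurable volume T).indicator (fun _ : ℝ => V) x :=
        setIntegral_le_integral hint (Eventually.of_forall hnn)
    _ = V * (volume T).toReal := by
        rw [integral_indicator hm, setIntegral_const, Measure.real, measure_toMeasurable,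
          smul_eq_mul, mul_comm]

lemma aux_amgm (a b c : ℝ) (ha : 0 ≤ a) (hb : 0 ≤ b) (h : c ≤ b * a) :
    2 * Real.sqrt (2 * c) ≤ 2 * a + b := by
  have : Real.sqrt (2 * c) ≤ (2 * a + b) / 2 := by
    apply Real.sqrt_le_iff.2
    constructor
    · positivity
    · nlinarith [sq_nonneg (2 * a - b)]
  linarith

lemma aux_lower (L σ : ℝ) (hL : 0 < L) (hσ1 : 0 < σ) (hσ2 : σ ≤ 1 / 2) (v : ℝ → ℝ)
    (hv : Adm L σ v) :
    min (min (2 * L) 1) (2 * Real.sqrt (2 * σ * L)) ≤ limitF L v := by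
  obtain ⟨h01, hbv, hint⟩ := hv
  have hvi : IntegrableOn v (Set.Ioo 0 L) := by
    apply Integrable.of_integral_ne_zero
    rw [hint]; positivity
  set T : Set ℝ := {x ∈ Set.Ioo 0 L | 0 < v x ∧ v x < 1} with hTdef
  have hT : T ⊆ Set.Ioo 0 L := fun x hx => hx.1
  set V := (eVariationOn v (Set.Ioo 0 L)).toReal with hVdef
  have hV0 : 0 ≤ V := ENNReal.toReal_nonneg
  have hT0 : 0 ≤ (volume T).toReal := ENNReal.toReal_nonneg
  have hF : limitF L v = 2 * (volume T).toReal + V := rfl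
  have hd : ∀ x ∈ Set.Ioo 0 L, ∀ y ∈ Set.Ioo 0 L, v x - v y ≤ V :=
    fun x hx y hy => hbv.sub_le hx hy
  rw [hF]
  by_cases hZ : ∃ z ∈ Set.Ioo 0 L, v z = 0
  · obtain ⟨z, hz, hz0⟩ := hZ
    by_cases hA : ∃ y ∈ Set.Ioo 0 L, v y = 1
    · obtain ⟨y, hy, hy1⟩ := hA
      have := hd y hy z hz
      have h1 : min (min (2 * L) 1) (2 * Real.sqrt (2 * σ * L)) ≤ 1 :=
        (min_le_left _ _).trans (min_le_right _ _)
      linarith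
    · push Not at hA
      refine (min_le_right _ _).trans ?_
      rw [mul_assoc 2 σ L]
      apply aux_amgm _ _ _ hT0 hV0
      rw [← hint]
      apply aux_bound L V hV0 v T hT hvi
      · intro x hx
        have := hd x hx z hz
        linarith
      · intro x hx hxT
        by_contra hc
        exact hxT ⟨hx, not_le.1 hc, lt_of_le_of_ne (h01 x hx).2 (hA x hx)⟩
  · push Not at hZ
    by_cases hA : ∃ y ∈ Set.Ioo 0 L, v y = 1
    · obtain ⟨y, hy, hy1⟩ := hA
      refine (min_le_right _ _).trans ?_
      rw [mul_assoc 2 σ L]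
      apply aux_amgm _ _ _ hT0 hV0
      have hci : IntegrableOn (fun _ : ℝ => (1 : ℝ)) (Set.Ioo 0 L) :=
        integrableOn_const (by simp)
      have key := aux_bound L V hV0 (fun x => 1 - v x) T hT (hci.sub hvi)
        (fun x hx => by have := hd y hy x hx; linarith)
        (fun x hx hxT => by
          by_contra hc
          exact hxT ⟨hx, lt_of_le_of_ne (h01 x hx).1 (hZ x hx).symm, by linarith⟩)
      rw [integral_sub hci hvi, hint] at key
      simp [hL.le] at key
      nlinarith
    · push Not at hA
      have hTe : T = Set.Ioo 0 L := by
        apply Set.Subset.antisymm hT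
        intro x hx
        exact ⟨hx, lt_of_le_of_ne (h01 x hx).1 (hZ x hx).symm,
          lt_of_le_of_ne (h01 x hx).2 (hA x hx)⟩
      have h1 : min (min (2 * L) 1) (2 * Real.sqrt (2 * σ * L)) ≤ 2 * L :=
        (min_le_left _ _).trans (min_le_left _ _)
      have h2 : (volume T).toReal = L := by
        rw [hTe, Real.volume_Ioo, sub_zero, ENNReal.toReal_ofReal hL.le]
      rw [h2]; linarith

/-- The step function. -/
def stepFn (L s M : ℝ) : ℝ → ℝ := (Set.Ici (L - s)).indicator (fun _ => M)

lemma step_mono (L s M : ℝ) (hM : 0 ≤ M) : Monotone (stepFn L s M) := by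
  intro x y hxy
  unfold stepFn
  by_cases hx : x ∈ Set.Ici (L - s)
  · rw [Set.indicator_of_mem hx, Set.indicator_of_mem (Set.mem_Ici.2 (le_trans (Set.mem_Ici.1 hx) hxy))]
  · rw [Set.indicator_of_notMem hx]
    exact Set.indicator_nonneg (fun _ _ => hM) y

lemma step_var (L s M : ℝ) (hs : 0 < s) (hsL : s < L) (hM : 0 < M) :
    eVariationOn (stepFn L s M) (Set.Ioo 0 L) = ENNReal.ofReal M := by
  apply le_antisymm
  · calc eVariationOn (stepFn L s M) (Set.Ioo 0 L)
        ≤ eVariationOn (stepFn L s M) (Set.univ ∩ Set.Icc 0 L) :=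
          eVariationOn.mono _ (fun x hx => ⟨trivial, hx.1.le, hx.2.le⟩)
      _ ≤ ENNReal.ofReal (stepFn L s M L - stepFn L s M 0) :=
          (((step_mono L s M hM.le).monotoneOn Set.univ).eVariationOn_eq (Set.mem_univ _) (Set.mem_univ _)).le
      _ = ENNReal.ofReal M := by
          simp [stepFn, Set.indicator, hs.le, not_le.2 hsL]
  · have h := eVariationOn.edist_le (stepFn L s M) (s := Set.Ioo 0 L)
      (x := L - s / 2) (y := (L - s) / 2) ⟨by linarith, by linarith⟩ ⟨by linarith, by linarith⟩
    have h1 : stepFn L s M (L - s / 2) = M :=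
      Set.indicator_of_mem (Set.mem_Ici.2 (by linarith)) _
    have h2 : stepFn L s M ((L - s) / 2) = 0 :=
      Set.indicator_of_notMem (fun hc => by have := Set.mem_Ici.1 hc; linarith) _
    rw [h1, h2, edist_dist, Real.dist_eq, sub_zero, abs_of_pos hM] at h
    exact h

lemma step_inter (L s : ℝ) (hsL : s < L) :
    Set.Ioo 0 L ∩ Set.Ici (L - s) = Set.Ico (L - s) L := by
  ext x
  simp only [Set.mem_inter_iff, Set.mem_Ioo, Set.mem_Ici, Set.mem_Ico]
  constructor
  · rintro ⟨⟨_, h⟩, h'⟩; exact ⟨h', h⟩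
  · rintro ⟨h', h⟩; exact ⟨⟨by linarith, h⟩, h'⟩

lemma step_adm (L s M σ : ℝ) (hs : 0 < s) (hsL : s < L) (hM : 0 < M) (hM1 : M ≤ 1)
    (h : s * M = σ * L) : Adm L σ (stepFn L s M) := by
  refine ⟨fun x _ => ⟨Set.indicator_nonneg (fun _ _ => hM.le) x, ?_⟩, ?_, ?_⟩
  · exact (Set.indicator_le_self' (fun _ _ => hM.le) x).trans hM1
  · unfold BoundedVariationOn
    rw [step_var L s M hs hsL hM]; simp
  · unfold stepFn
    rw [setIntegral_indicator measurableSet_Ici, step_inter L s hsL, setIntegral_const,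
      Measure.real, Real.volume_Ico, sub_sub_cancel, ENNReal.toReal_ofReal hs.le, smul_eq_mul, h]

/-- Value of the volume-constrained minimum problem for the limit functional. -/
theorem volume_constrained_min_value (L σ : ℝ) (hL : 0 < L) (hσ1 : 0 < σ) (hσ2 : σ ≤ 1 / 2) :
    IsLeast {c : ℝ | ∃ v : ℝ → ℝ, Adm L σ v ∧ limitF L v = c}
      (min (min (2 * L) 1) (2 * Real.sqrt (2 * σ * L))) := by
  constructor
  · rcases min_choice (min (2 * L) 1) (2 * Real.sqrt (2 * σ * L)) with h | h
    · rw [h]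
      rcases min_choice (2 * L) 1 with h' | h'
      · rw [h']
        have hvar : eVariationOn (fun _ : ℝ => σ) (Set.Ioo 0 L) = 0 :=
          eVariationOn.constant_on (by
            rintro _ ⟨_, _, rfl⟩ _ ⟨_, _, rfl⟩; rfl)
        refine ⟨fun _ => σ, ⟨fun x _ => ⟨hσ1.le, by linarith⟩, ?_, ?_⟩, ?_⟩
        · unfold BoundedVariationOn
          rw [hvar]; simp
        · simp [hL.le, mul_comm]
        · have hσ3 : σ < 1 := by linarith
          have hset : {x ∈ Set.Ioo 0 L | 0 < σ ∧ σ < 1} = Set.Ioo 0 L := by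
            ext x; simp [hσ1, hσ3]
          unfold limitF
          rw [hvar, hset]
          simp [hL.le]
      · rw [h']
        have hs : 0 < σ * L := by positivity
        have hsL : σ * L < L := by nlinarith
        refine ⟨stepFn L (σ * L) 1, step_adm L _ 1 σ hs hsL one_pos le_rfl (mul_one _), ?_⟩
        have hset : {x ∈ Set.Ioo 0 L | 0 < stepFn L (σ * L) 1 x ∧ stepFn L (σ * L) 1 x < 1}
            = ∅ := by
          ext x
          simp only [stepFn, Set.indicator, Set.mem_ofPred_eq, Set.mem_empty_iff_false]
          split_ifs <;> simp
        unfold limitF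
        rw [step_var _ _ _ hs hsL one_pos, hset]
        simp
    · rw [h]
      have hle := min_eq_right_iff.1 h
      have hle1 := hle.trans (min_le_left _ _)
      have hle2 := hle.trans (min_le_right _ _)
      have hMpos : 0 < Real.sqrt (2 * σ * L) := Real.sqrt_pos.2 (by positivity)
      have hsq : Real.sqrt (2 * σ * L) * Real.sqrt (2 * σ * L) = 2 * σ * L :=
        Real.mul_self_sqrt (by positivity)
      set M := Real.sqrt (2 * σ * L) with hMdef
      have hs : 0 < M / 2 := by positivity
      have hsL : M / 2 < L := by linarith
      have hM1 : M < 1 := by linarith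
      refine ⟨stepFn L (M / 2) M, step_adm L _ M σ hs hsL hMpos hM1.le (by linarith), ?_⟩
      have hset : {x ∈ Set.Ioo 0 L | 0 < stepFn L (M / 2) M x ∧ stepFn L (M / 2) M x < 1}
          = Set.Ico (L - M / 2) L := by
        rw [← step_inter L _ hsL]
        ext x
        by_cases hx : x ∈ Set.Ici (L - M / 2)
        · have : stepFn L (M / 2) M x = M := Set.indicator_of_mem hx _
          simp only [Set.mem_ofPred_eq, Set.mem_inter_iff, this]
          tauto
        · have : stepFn L (M / 2) M x = 0 := Set.indicator_of_notMem hx _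
          simp only [Set.mem_ofPred_eq, Set.mem_inter_iff, this, lt_irrefl]
          tauto
      unfold limitF
      rw [step_var _ _ _ hs hsL hMpos, hset, Real.volume_Ico, sub_sub_cancel,
        ENNReal.toReal_ofReal hs.le, ENNReal.toReal_ofReal hMpos.le]
      ring
  · rintro c ⟨v, hv, rfl⟩
    exact aux_lower L σ hL hσ1 hσ2 v hv
end
end

section
/- Uniqueness of the minimizer in small domains: Let 0 < L < 1/2 and L/2 < σ ≤ 1/2. If v ∈ Adm(L,σ) satisfies F^L(v) = 2L (which is the minimum value of F^L on Adm(L,σ)), then v(x) = σ for almost every x ∈ (0,L). -/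
open MeasureTheory Filter Set

noncomputable section

/-- Uniqueness of the minimizer in small domains: for `0 < L < 1/2` and `L/2 < σ ≤ 1/2`,
any `v ∈ Adm(L,σ)` with `F^L(v) = 2L` equals the constant `σ` a.e. on `(0,L)`. -/
theorem small_domain_unique_minimizer (L σ : ℝ)
    (hL1 : 0 < L) (hL2 : L < 1 / 2) (hσ1 : L / 2 < σ) (hσ2 : σ ≤ 1 / 2)
    (v : ℝ → ℝ) (hv : Adm L σ v) (hmin : limitF L v = 2 * L) :
    ∀ᵐ x ∂(volume.restrict (Set.Ioo 0 L)), v x = σ := by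
  obtain ⟨h01, hbv, hint⟩ := hv
  unfold limitF at hmin
  set V := (eVariationOn v (Set.Ioo 0 L)).toReal with hV
  have hVd : ∀ x ∈ Set.Ioo 0 L, ∀ y ∈ Set.Ioo 0 L, v x - v y ≤ V := fun x hx y hy =>
    (le_abs_self _).trans ((Real.dist_eq _ _).symm.le.trans (hbv.dist_le hx hy))
  have hV0 : 0 ≤ V := ENNReal.toReal_nonneg
  set T : Set ℝ := {x | 0 < v x ∧ v x < 1} with hT
  set μ := volume.restrict (Set.Ioo 0 L) with hμ
  have hST : (volume {x ∈ Set.Ioo 0 L | 0 < v x ∧ v x < 1}).toReal = μ.real T := by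
    rw [measureReal_def, hμ, Measure.restrict_apply' measurableSet_Ioo, Set.inter_comm]
    rfl
  rw [hST] at hmin
  have hI : Integrable v μ := by
    by_contra h
    rw [integral_undef h] at hint
    have : 0 < σ * L := mul_pos (by linarith) hL1
    linarith
  have hTm : NullMeasurableSet T μ := by
    have h1 : NullMeasurableSet {x | 0 < v x} μ :=
      nullMeasurableSet_lt aemeasurable_const hI.1.aemeasurable
    have h2 : NullMeasurableSet {x | v x < 1} μ :=
      nullMeasurableSet_lt hI.1.aemeasurable aemeasurable_const
    exact h1.inter h2
  have hμL : μ.real univ = L := by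
    simp [hμ, measureReal_def, hL1.le]
  have hind : ∫ x, T.indicator (fun _ => V) x ∂μ = μ.real T * V := by
    rw [integral_indicator₀ hTm]; simp
  have hindI : Integrable (T.indicator (fun _ => V)) μ :=
    (integrable_const V).indicator₀ hTm
  have hae : ∀ᵐ x ∂μ, x ∈ Set.Ioo 0 L := ae_restrict_mem measurableSet_Ioo
  by_cases hZ : ∃ x ∈ Set.Ioo 0 L, v x = 0
  · obtain ⟨z, hz, hvz⟩ := hZ
    exfalso
    have hV1 : V < 1 := by
      have : 0 ≤ μ.real T := measureReal_nonneg
      linarith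
    have hle : ∫ x, v x ∂μ ≤ ∫ x, T.indicator (fun _ => V) x ∂μ := by
      refine integral_mono_ae hI hindI ?_
      filter_upwards [hae] with x hx
      have h1 := hVd x hx z hz
      by_cases hxT : x ∈ T
      · rw [Set.indicator_of_mem hxT]; linarith
      · rw [Set.indicator_of_notMem hxT]
        by_contra hc
        push Not at hc
        exact hxT ⟨hc, by linarith⟩
    rw [hind, hint] at hle
    have : V = 2 * L - 2 * μ.real T := by linarith
    rw [this] at hle
    nlinarith [sq_nonneg (L - 2 * μ.real T)]
  by_cases hO : ∃ x ∈ Set.Ioo 0 L, v x = 1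
  · obtain ⟨z, hz, hvz⟩ := hO
    exfalso
    have hle : ∫ x, (1 - T.indicator (fun _ => V) x) ∂μ ≤ ∫ x, v x ∂μ := by
      refine integral_mono_ae ((integrable_const 1).sub hindI) hI ?_
      filter_upwards [hae] with x hx
      have h1 := hVd z hz x hx
      by_cases hxT : x ∈ T
      · rw [Set.indicator_of_mem hxT]; linarith
      · rw [Set.indicator_of_notMem hxT]
        by_contra hc
        push Not at hc
        refine hxT ⟨lt_of_le_of_ne (h01 x hx).1 fun h => hZ ⟨x, hx, h.symm⟩, by linarith⟩
    rw [integral_sub (integrable_const 1) hindI, hind, hint, integral_const, hμL] at hle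
    have : V = 2 * L - 2 * μ.real T := by linarith
    rw [this, smul_eq_mul] at hle
    nlinarith [sq_nonneg (L - 2 * μ.real T)]
  · have hTL : μ.real T = L := by
      rw [← hμL]
      refine measureReal_congr ?_
      filter_upwards [hae] with x hx
      refine propext ⟨fun _ => trivial, fun _ => ?_⟩
      exact ⟨lt_of_le_of_ne (h01 x hx).1 fun h => hZ ⟨x, hx, h.symm⟩,
        lt_of_le_of_ne (h01 x hx).2 fun h => hO ⟨x, hx, h⟩⟩
    have hV00 : V = 0 := by linarith
    have hm : L / 2 ∈ Set.Ioo 0 L := ⟨by linarith, by linarith⟩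
    have hc : ∀ x ∈ Set.Ioo 0 L, v x = v (L / 2) := fun x hx => by
      have := hVd x hx _ hm
      have := hVd _ hm x hx
      linarith
    have h2 : ∫ x, v x ∂μ = ∫ _, v (L / 2) ∂μ := by
      refine integral_congr_ae ?_
      filter_upwards [hae] with x hx using hc x hx
    rw [hint, integral_const, hμL, smul_eq_mul, mul_comm] at h2
    have h3 : σ = v (L / 2) := mul_left_cancel₀ hL1.ne' h2
    filter_upwards [hae] with x hx
    rw [hc x hx, h3]
end
end

section
/- Characterization of minimizers in large domains: Let L > 1/2 and 1/(8L) < σ < 1/2. If v ∈ Adm(L,σ) satisfies F^L(v) = 1 (which is the minimum value of F^L on Adm(L,σ)), then either v equals the indicator function of (0, σL) almost everywhere on (0,L), or v equals the indicator function of (L − σL, L) almost everywhere on (0,L). -/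
open MeasureTheory Filter Set

noncomputable section

lemma four_points (v : ℝ → ℝ) (s : Set ℝ) (hb : BoundedVariationOn v s) (p q r t : ℝ)
    (hpq : p ≤ q) (hqr : q ≤ r) (hrt : r ≤ t) (hp : p ∈ s) (hq : q ∈ s) (hr : r ∈ s) (ht : t ∈ s) :
    |v q - v p| + |v r - v q| + |v t - v r| ≤ (eVariationOn v s).toReal := by
  let u : ℕ → ℝ := fun n => match n with
    | 0 => p
    | 1 => q
    | 2 => r
    | _ => t
  have hu : Monotone u := by
    apply monotone_nat_of_le_succ
    intro n
    match n with
    | 0 => exact hpq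
    | 1 => exact hqr
    | 2 => exact hrt
    | (k+3) => exact le_refl t
  have us : ∀ n, u n ∈ s := by
    intro n
    match n with
    | 0 => exact hp
    | 1 => exact hq
    | 2 => exact hr
    | (k+3) => exact ht
  have h := eVariationOn.sum_le (f := v) (s := s) (n := 3) hu us
  have h2 := ENNReal.toReal_mono hb h
  rw [ENNReal.toReal_sum (by intro i _; exact edist_ne_top _ _)] at h2
  simp only [Finset.sum_range_succ, Finset.sum_range_zero, zero_add, ← dist_edist,
    Real.dist_eq] at h2
  exact h2

lemma no_small (L V c : ℝ) (hL : 1 / 2 < L) (hc : 1 / 8 < c) (w : ℝ → ℝ)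
    (h0 : ∀ x ∈ Set.Ioo 0 L, 0 ≤ w x ∧ w x < 1)
    (hV : ∀ x ∈ Set.Ioo 0 L, ∀ y ∈ Set.Ioo 0 L, |w x - w y| ≤ V) (hV0 : 0 ≤ V)
    (hcInt : ∫ x in Set.Ioo 0 L, w x = c)
    (hm : 2 * (volume {x ∈ Set.Ioo 0 L | 0 < w x ∧ w x < 1}).toReal + V = 1) : False := by
  have hI : IntegrableOn w (Set.Ioo 0 L) := by
    by_contra h
    have := integral_undef h
    rw [this] at hcInt
    linarith
  set S := {x ∈ Set.Ioo 0 L | 0 < w x ∧ w x < 1} with hS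
  by_cases hpos : ∀ x ∈ Set.Ioo 0 L, 0 < w x
  · have : S = Set.Ioo 0 L := by
      ext x
      simp only [hS, Set.mem_setOf_eq]
      exact ⟨fun h => h.1, fun h => ⟨h, hpos x h, (h0 x h).2⟩⟩
    rw [this, Real.volume_Ioo, ENNReal.toReal_ofReal (by linarith)] at hm
    linarith
  · push Not at hpos
    obtain ⟨a, ha, ha0⟩ := hpos
    have ha1 : w a = 0 := le_antisymm ha0 (h0 a ha).1
    have hSfin : volume S ≠ ⊤ := by
      apply ne_top_of_le_ne_top (b := volume (Set.Ioo 0 L))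
      · simp
      · exact measure_mono (fun x hx => hx.1)
    let T := toMeasurable volume S
    have hT : MeasurableSet T := measurableSet_toMeasurable _ _
    have hTv : volume T = volume S := measure_toMeasurable S
    have hle : ∫ x in Set.Ioo 0 L, w x ≤ ∫ x in Set.Ioo 0 L, T.indicator (fun _ => V) x := by
      apply setIntegral_mono_on hI _ measurableSet_Ioo
      · intro x hx
        by_cases hxT : x ∈ T
        · rw [Set.indicator_of_mem hxT]
          have := hV x hx a ha
          rw [ha1, sub_zero] at this
          exact (le_abs_self _).trans this
        · rw [Set.indicator_of_notMem hxT]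
          by_contra hcon
          push Not at hcon
          exact hxT (subset_toMeasurable volume S ⟨hx, hcon, (h0 x hx).2⟩)
      · apply Integrable.indicator _ hT
        exact integrableOn_const (by simp)
    rw [integral_indicator hT, integral_const, hcInt] at hle
    simp only [smul_eq_mul, Measure.restrict_restrict hT, measureReal_restrict_apply_univ] at hle
    have h3 : volume.real (T ∩ Set.Ioo 0 L) ≤ (volume S).toReal := by
      rw [← hTv]
      exact ENNReal.toReal_mono (hTv ▸ hSfin) (measure_mono Set.inter_subset_left)
    have h4 := mul_le_mul_of_nonneg_right h3 hV0
    generalize (volume S).toReal = m at *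
    have : V = 1 - 2 * m := by linarith
    subst this
    nlinarith [sq_nonneg (4 * m - 1)]

lemma step_shape (L c : ℝ) (w : ℝ → ℝ) (hL : 0 < L)
    (h0 : ∀ x ∈ Set.Ioo 0 L, 0 ≤ w x ∧ w x ≤ 1)
    (h4 : ∀ p ∈ Set.Ioo 0 L, ∀ q ∈ Set.Ioo 0 L, ∀ r ∈ Set.Ioo 0 L, ∀ t ∈ Set.Ioo 0 L,
      p ≤ q → q ≤ r → r ≤ t → |w q - w p| + |w r - w q| + |w t - w r| ≤ 1)
    (a b : ℝ) (ha : a ∈ Set.Ioo 0 L) (hb : b ∈ Set.Ioo 0 L) (hab : a < b)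
    (hwa : w a = 0) (hwb : w b = 1)
    (hI : IntegrableOn w (Set.Ioo 0 L))
    (hcInt : ∫ x in Set.Ioo 0 L, w x = c)
    (h01 : volume {x ∈ Set.Ioo 0 L | 0 < w x ∧ w x < 1} = 0) :
    ∀ᵐ x ∂(volume.restrict (Set.Ioo 0 L)), (x < L - c ∧ w x = 0) ∨ (L - c < x ∧ w x = 1) := by
  have hmono : ∀ x ∈ Set.Ioo 0 L, ∀ y ∈ Set.Ioo 0 L, x ≤ y → w x ≤ w y := by
    intro x hx y hy hxy
    by_contra hcon
    push Not at hcon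
    have hx0 := h0 x hx
    have hy0 := h0 y hy
    rcases lt_or_ge x a with hxa | hxa
    · have := h4 x hx a ha a ha b hb hxa.le le_rfl hab.le
      rw [hwa, hwb] at this
      norm_num at this
      rw [this] at hcon
      linarith
    · rcases lt_or_ge b y with hyb | hyb
      · have := h4 a ha b hb b hb y hy hab.le le_rfl hyb.le
        rw [hwa, hwb] at this
        norm_num at this
        have : w y = 1 := by linarith
        linarith
      · have := h4 a ha x hx y hy b hb hxa hxy hyb
        rw [hwa, hwb] at this
        have e1 := le_abs_self (w x - 0)
        have e2 := neg_abs_le (w y - w x)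
        have e3 := le_abs_self (1 - w y)
        linarith
  have hae1 : ∀ᵐ x ∂(volume : Measure ℝ), ¬ (x ∈ {x ∈ Set.Ioo 0 L | 0 < w x ∧ w x < 1}) :=
    measure_eq_zero_iff_ae_notMem.mp h01
  have hae2 : ∀ᵐ x ∂(volume : Measure ℝ), x ≠ L - c := by
    simp [ae_iff]
  rw [ae_restrict_iff' measurableSet_Ioo]
  filter_upwards [hae1, hae2] with x hx1 hx2 hx
  have hx0 := h0 x hx
  have hsplit : ∫ y in Set.Ioo 0 L, w y = (∫ y in Set.Ioc 0 x, w y) + ∫ y in Set.Ioo x L, w y := by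
    rw [← setIntegral_union]
    · rw [Set.Ioc_union_Ioo_eq_Ioo hx.1.le hx.2]
    · rw [Set.disjoint_left]
      intro y hy hy'
      exact absurd hy.2 (not_le.mpr hy'.1)
    · exact measurableSet_Ioo
    · exact hI.mono_set (fun y hy => ⟨hy.1, hy.2.trans_lt hx.2⟩)
    · exact hI.mono_set (fun y hy => ⟨hx.1.trans hy.1, hy.2⟩)
  have hcases : w x = 0 ∨ w x = 1 := by
    by_contra hcon
    push Not at hcon
    exact hx1 ⟨hx, lt_of_le_of_ne hx0.1 (Ne.symm hcon.1), lt_of_le_of_ne hx0.2 hcon.2⟩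
  have hlen : ∫ y in Set.Ioo x L, (1:ℝ) = L - x := by
    simp [hx.2.le]
  rcases hcases with hw | hw
  · left
    refine ⟨?_, hw⟩
    by_contra hcon
    have h1 : ∫ y in Set.Ioc 0 x, w y = 0 := by
      rw [setIntegral_congr_fun (g := fun _ => (0:ℝ)) measurableSet_Ioc]
      · simp
      · intro y hy
        have hyI : y ∈ Set.Ioo 0 L := ⟨hy.1, hy.2.trans_lt hx.2⟩
        exact le_antisymm (hw ▸ hmono y hyI x hx hy.2) (h0 y hyI).1
    have h2 : ∫ y in Set.Ioo x L, w y ≤ ∫ y in Set.Ioo x L, (1:ℝ) := by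
      apply setIntegral_mono_on _ (integrableOn_const (by simp)) measurableSet_Ioo
      · intro y hy
        exact (h0 y ⟨hx.1.trans hy.1, hy.2⟩).2
      · exact hI.mono_set (fun y hy => ⟨hx.1.trans hy.1, hy.2⟩)
    rcases lt_or_gt_of_ne hx2 with h | h <;> linarith
  · right
    refine ⟨?_, hw⟩
    by_contra hcon
    have h1 : 0 ≤ ∫ y in Set.Ioc 0 x, w y :=
      setIntegral_nonneg measurableSet_Ioc (fun y hy => (h0 y ⟨hy.1, hy.2.trans_lt hx.2⟩).1)
    have h2 : ∫ y in Set.Ioo x L, w y = ∫ y in Set.Ioo x L, (1:ℝ) := by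
      apply setIntegral_congr_fun measurableSet_Ioo
      intro y hy
      have hyI : y ∈ Set.Ioo 0 L := ⟨hx.1.trans hy.1, hy.2⟩
      exact le_antisymm (h0 y hyI).2 (hw ▸ hmono x hx y hyI hy.1.le)
    rcases lt_or_gt_of_ne hx2 with h | h <;> linarith

/-- Characterization of minimizers in large domains: for `L > 1/2` and `1/(8L) < σ < 1/2`,
any `v ∈ Adm(L,σ)` with `F^L(v) = 1` equals a.e. on `(0,L)` the indicator of `(0,σL)` or
the indicator of `(L−σL, L)`. -/
theorem large_domain_minimizers (L σ : ℝ)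
    (hL : 1 / 2 < L) (hσ1 : 1 / (8 * L) < σ) (hσ2 : σ < 1 / 2)
    (v : ℝ → ℝ) (hv : Adm L σ v) (hmin : limitF L v = 1) :
    (∀ᵐ x ∂(volume.restrict (Set.Ioo 0 L)),
        v x = Set.indicator (Set.Ioo 0 (σ * L)) (fun _ => (1 : ℝ)) x) ∨
    (∀ᵐ x ∂(volume.restrict (Set.Ioo 0 L)),
        v x = Set.indicator (Set.Ioo (L - σ * L) L) (fun _ => (1 : ℝ)) x) := by
  obtain ⟨h0, hbv, hcInt⟩ := hv
  have hL0 : 0 < L := by linarith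
  have hc : 1 / 8 < σ * L := by
    rw [div_lt_iff₀ (by positivity)] at hσ1
    linarith
  have hI : IntegrableOn v (Set.Ioo 0 L) := by
    by_contra h
    have := integral_undef h
    rw [this] at hcInt
    linarith
  unfold limitF at hmin
  have h4 := four_points v _ hbv
  have hV0 : 0 ≤ (eVariationOn v (Set.Ioo 0 L)).toReal := ENNReal.toReal_nonneg
  generalize (eVariationOn v (Set.Ioo 0 L)).toReal = V at *
  have hV : ∀ x ∈ Set.Ioo 0 L, ∀ y ∈ Set.Ioo 0 L, |v x - v y| ≤ V := by
    intro x hx y hy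
    rcases le_total x y with h | h
    · have := h4 x y y y h le_rfl le_rfl hx hy hy hy
      rw [abs_sub_comm]
      simpa using this
    · have := h4 y x x x h le_rfl le_rfl hy hx hx hx
      simpa using this
  have hcInt2 : ∫ x in Set.Ioo 0 L, (1 - v x) = L - σ * L := by
    have h1 : Integrable (fun _ : ℝ => (1:ℝ)) (volume.restrict (Set.Ioo 0 L)) :=
      integrableOn_const (by simp)
    rw [integral_sub h1 hI, hcInt]
    simp [hL0.le]
  have hset : {x ∈ Set.Ioo 0 L | 0 < 1 - v x ∧ 1 - v x < 1}
      = {x ∈ Set.Ioo 0 L | 0 < v x ∧ v x < 1} := by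
    ext x
    simp only [Set.mem_setOf_eq]
    constructor
    · rintro ⟨h, h1, h2⟩
      exact ⟨h, by linarith, by linarith⟩
    · rintro ⟨h, h1, h2⟩
      exact ⟨h, by linarith, by linarith⟩
  by_cases hA : ∀ x ∈ Set.Ioo 0 L, v x < 1
  · exact (no_small L V (σ * L) hL hc v (fun x hx => ⟨(h0 x hx).1, hA x hx⟩) hV hV0 hcInt
      hmin).elim
  by_cases hB : ∀ x ∈ Set.Ioo 0 L, 0 < v x
  · refine (no_small L V (L - σ * L) hL (by nlinarith) (fun x => 1 - v x) ?_ ?_ hV0 hcInt2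
      (by rw [hset]; exact hmin)).elim
    · intro x hx
      have := hB x hx
      have := h0 x hx
      constructor <;> linarith
    · intro x hx y hy
      have := hV y hy x hx
      have e : (1 - v x) - (1 - v y) = v y - v x := by ring
      rw [e]
      exact this
  push Not at hA hB
  obtain ⟨b, hb, hb1⟩ := hA
  obtain ⟨a, ha, ha1⟩ := hB
  have hvb : v b = 1 := le_antisymm (h0 b hb).2 hb1
  have hva : v a = 0 := le_antisymm ha1 (h0 a ha).1
  have hm0 : 0 ≤ (volume {x ∈ Set.Ioo 0 L | 0 < v x ∧ v x < 1}).toReal := ENNReal.toReal_nonneg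
  have hV1 : 1 ≤ V := by
    have := hV b hb a ha
    rw [hva, hvb] at this
    simpa using this
  have hVeq : V = 1 := by linarith
  have hSfin : volume {x ∈ Set.Ioo 0 L | 0 < v x ∧ v x < 1} ≠ ⊤ := by
    apply ne_top_of_le_ne_top (b := volume (Set.Ioo 0 L))
    · simp
    · exact measure_mono (fun x hx => hx.1)
  have hS0 : volume {x ∈ Set.Ioo 0 L | 0 < v x ∧ v x < 1} = 0 := by
    have : (volume {x ∈ Set.Ioo 0 L | 0 < v x ∧ v x < 1}).toReal = 0 := by linarith
    rcases (ENNReal.toReal_eq_zero_iff _).mp this with h | h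
    · exact h
    · exact absurd h hSfin
  subst hVeq
  have hne : a ≠ b := by
    rintro rfl
    linarith
  rcases lt_or_gt_of_ne hne with hab | hab
  · right
    have := step_shape L (σ * L) v hL0 h0
      (fun p hp q hq r hr t ht h1 h2 h3 => h4 p q r t h1 h2 h3 hp hq hr ht)
      a b ha hb hab hva hvb hI hcInt hS0
    filter_upwards [this, ae_restrict_mem measurableSet_Ioo] with x hx hxI
    rcases hx with ⟨h1, h2⟩ | ⟨h1, h2⟩
    · rw [h2, Set.indicator_of_notMem]
      intro h
      linarith [h.1]
    · rw [h2, Set.indicator_of_mem]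
      exact ⟨h1, hxI.2⟩
  · left
    have := step_shape L (L - σ * L) (fun x => 1 - v x) hL0
      (fun x hx => ⟨by linarith [(h0 x hx).2], by linarith [(h0 x hx).1]⟩)
      (fun p hp q hq r hr t ht h1 h2 h3 => by
        have := h4 p q r t h1 h2 h3 hp hq hr ht
        simp only [sub_sub_sub_cancel_left]
        rw [abs_sub_comm (v p) (v q), abs_sub_comm (v q) (v r), abs_sub_comm (v r) (v t)]
        exact this)
      b a hb ha hab (by simp [hvb]) (by simp [hva])
      ((integrableOn_const (by simp)).sub hI) hcInt2 (by rw [hset]; exact hS0)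
    filter_upwards [this, ae_restrict_mem measurableSet_Ioo] with x hx hxI
    rcases hx with ⟨h1, h2⟩ | ⟨h1, h2⟩
    · rw [Set.indicator_of_mem]
      · linarith
      · exact ⟨hxI.1, by linarith⟩
    · rw [Set.indicator_of_notMem]
      · linarith
      · intro h
        linarith [h.2]
end
end

section
/- For all τ, x, y ∈ [0,1], φ_τ(x,y) = φ_{1−τ}(y,x). -/
open MeasureTheory Set

noncomputable section

/-- The boundary term `φ_τ(x,y) = λ( [0,1] ∩ ( ([−τ,x−τ] ∪ [1−τ,x+1−τ]) Δ [0,y] ) )`. -/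
def phi (τ x y : ℝ) : ℝ :=
  (volume (Set.Icc (0 : ℝ) 1 ∩
    symmDiff (Set.Icc (-τ) (x - τ) ∪ Set.Icc (1 - τ) (x + 1 - τ)) (Set.Icc 0 y))).toReal

lemma vol_split (S : Set ℝ) (hS : S ⊆ Icc 0 1) (c : ℝ) (hc : c ∈ Icc (0 : ℝ) 1) :
    volume S = volume (S ∩ Ioo 0 c) + volume (S ∩ Ioo c 1) := by
  rw [← measure_inter_add_diff S (measurableSet_Ioo (a := (0 : ℝ)) (b := c))]
  congr 1
  apply measure_congr
  have h : ∀ a : ℝ, ∀ᵐ t ∂(volume : Measure ℝ), t ≠ a := fun a => Measure.ae_ne volume a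
  filter_upwards [h 0, h c, h 1] with t h0 hc' h1
  apply propext
  change (t ∈ S ∧ ¬ (0 < t ∧ t < c)) ↔ (t ∈ S ∧ (c < t ∧ t < 1))
  constructor
  · rintro ⟨hs, hn⟩
    have := hS hs
    refine ⟨hs, ?_, lt_of_le_of_ne this.2 h1⟩
    by_contra hlt
    exact hn ⟨lt_of_le_of_ne this.1 (Ne.symm h0), lt_of_le_of_ne (not_lt.1 hlt) hc'⟩
  · rintro ⟨hs, h2, h3⟩
    exact ⟨hs, fun h => by linarith [h.2]⟩

/-- Symmetry of the boundary term: `φ_τ(x,y) = φ_{1−τ}(y,x)`. -/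
theorem phi_symm (τ x y : ℝ) (hτ : τ ∈ Set.Icc (0 : ℝ) 1)
    (hx : x ∈ Set.Icc (0 : ℝ) 1) (hy : y ∈ Set.Icc (0 : ℝ) 1) :
    phi τ x y = phi (1 - τ) y x := by
  obtain ⟨t0, t1⟩ := hτ
  obtain ⟨x0, x1⟩ := hx
  obtain ⟨y0, y1⟩ := hy
  unfold phi
  congr 1
  rw [vol_split _ inter_subset_left (1 - τ) ⟨by linarith, by linarith⟩]
  conv_rhs => rw [vol_split _ inter_subset_left τ ⟨t0, t1⟩]
  rw [add_comm]
  congr 1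
  · conv_rhs => rw [← measure_preimage_add_right volume (τ - 1)]
    congr 1
    ext t
    simp only [mem_inter_iff, mem_preimage, mem_symmDiff, mem_union, mem_Icc, mem_Ioo]
    grind
  · conv_rhs => rw [← measure_preimage_add_right volume τ]
    congr 1
    ext t
    simp only [mem_inter_iff, mem_preimage, mem_symmDiff, mem_union, mem_Icc, mem_Ioo]
    grind
end
end

section
/- Monotonicity of the boundary term: for all τ ∈ [0,1/2] and all x, y ∈ [0,1] with x ≥ y, one has φ_τ(x,y) ≤ φ_τ(y,x). -/
open MeasureTheory Set

noncomputable section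

lemma phi_vol_two (a b c d : ℝ) (h : b ≤ c) :
    volume.real (Set.Icc a b ∪ Set.Icc c d) = max (b - a) 0 + max (d - c) 0 := by
  have h1 := measureReal_union_add_inter (μ := volume) (s := Set.Icc a b) (t := Set.Icc c d)
    measurableSet_Icc (by simp) (by simp)
  rw [Set.Icc_inter_Icc, Real.volume_real_Icc, Real.volume_real_Icc, Real.volume_real_Icc] at h1
  have h2 : max (b ⊓ d - a ⊔ c) 0 = 0 := by
    apply max_eq_right
    have := inf_le_left (a := b) (b := d)
    have := le_sup_right (a := a) (b := c)
    linarith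
  linarith

lemma phi_formula (τ x y : ℝ) (h0 : 0 ≤ τ) (h1 : τ ≤ 1 / 2)
    (hx0 : 0 ≤ x) (hx1 : x ≤ 1) (hy0 : 0 ≤ y) (hy1 : y ≤ 1) :
    phi τ x y = x + y - 2 * (max (min (x - τ) y) 0 +
      max (min (min 1 (x + 1 - τ)) y - (1 - τ)) 0) := by
  have hS : Set.Icc (0 : ℝ) 1 ∩ (Set.Icc (-τ) (x - τ) ∪ Set.Icc (1 - τ) (x + 1 - τ)) =
      Set.Icc 0 (x - τ) ∪ Set.Icc (1 - τ) (min 1 (x + 1 - τ)) := by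
    ext t
    simp only [Set.mem_inter_iff, Set.mem_union, Set.mem_Icc, le_min_iff]
    constructor
    · rintro ⟨⟨_, _⟩, ⟨_, _⟩ | ⟨_, _⟩⟩
      · left; constructor <;> linarith
      · right; refine ⟨?_, ?_, ?_⟩ <;> linarith
    · rintro (⟨_, _⟩ | ⟨_, _, _⟩)
      · refine ⟨⟨?_, ?_⟩, Or.inl ⟨?_, ?_⟩⟩ <;> linarith
      · refine ⟨⟨?_, ?_⟩, Or.inr ⟨?_, ?_⟩⟩ <;> linarith
  have hB : Set.Icc (0 : ℝ) 1 ∩ Set.Icc 0 y = Set.Icc 0 y := by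
    rw [Set.Icc_inter_Icc]; simp [hy1]
  have hI : (Set.Icc 0 (x - τ) ∪ Set.Icc (1 - τ) (min 1 (x + 1 - τ))) ∩ Set.Icc 0 y =
      Set.Icc 0 (min (x - τ) y) ∪ Set.Icc (1 - τ) (min (min 1 (x + 1 - τ)) y) := by
    have e : max (1 - τ) 0 = 1 - τ := max_eq_left (by linarith)
    rw [Set.union_inter_distrib_right, Set.Icc_inter_Icc, Set.Icc_inter_Icc, e, max_self]
  unfold phi
  rw [Set.inter_symmDiff_distrib_left, hS, hB, ← Measure.real]
  have vS := phi_vol_two 0 (x - τ) (1 - τ) (min 1 (x + 1 - τ)) (by linarith)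
  have vI := phi_vol_two 0 (min (x - τ) y) (1 - τ) (min (min 1 (x + 1 - τ)) y)
    (by have := min_le_left (x - τ) y; linarith)
  have vB : volume.real (Set.Icc 0 y) = y := by
    rw [Real.volume_real_Icc, sub_zero, max_eq_left hy0]
  rw [← hI] at vI
  have mS : MeasurableSet (Set.Icc 0 (x - τ) ∪ Set.Icc (1 - τ) (min 1 (x + 1 - τ))) :=
    measurableSet_Icc.union measurableSet_Icc
  have fS : volume (Set.Icc 0 (x - τ) ∪ Set.Icc (1 - τ) (min 1 (x + 1 - τ))) ≠ ⊤ :=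
    (measure_union_lt_top (by simp) (by simp)).ne
  generalize Set.Icc 0 (x - τ) ∪ Set.Icc (1 - τ) (min 1 (x + 1 - τ)) = S at *
  have k := measureReal_symmDiff_eq (μ := volume) mS
    (measurableSet_Icc (a := (0 : ℝ)) (b := y)) fS (by simp)
  have k1 := measureReal_inter_add_diff (μ := volume) (s := S)
    (measurableSet_Icc (a := (0 : ℝ)) (b := y)) fS
  have k2 := measureReal_inter_add_diff (μ := volume) (s := Set.Icc 0 y) mS (by simp)
  rw [Set.inter_comm] at k2
  have vx : max (x - τ - 0) 0 + max (min 1 (x + 1 - τ) - (1 - τ)) 0 = x := by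
    grind
  rw [sub_zero] at vI
  linarith

/-- Monotonicity of the boundary term: for `τ ∈ [0,1/2]` and `x ≥ y` in `[0,1]`,
`φ_τ(x,y) ≤ φ_τ(y,x)`. -/
theorem phi_mono (τ x y : ℝ) (hτ : τ ∈ Set.Icc (0 : ℝ) (1 / 2))
    (hx : x ∈ Set.Icc (0 : ℝ) 1) (hy : y ∈ Set.Icc (0 : ℝ) 1) (hxy : y ≤ x) :
    phi τ x y ≤ phi τ y x := by
  obtain ⟨h0, h1⟩ := hτ
  obtain ⟨hx0, hx1⟩ := hx
  obtain ⟨hy0, hy1⟩ := hy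
  rw [phi_formula τ x y h0 h1 hx0 hx1 hy0 hy1, phi_formula τ y x h0 h1 hy0 hy1 hx0 hx1]
  have key : max (min (y - τ) x) 0 + max (min (min 1 (y + 1 - τ)) x - (1 - τ)) 0 ≤
      max (min (x - τ) y) 0 + max (min (min 1 (x + 1 - τ)) y - (1 - τ)) 0 := by
    grind
  linarith
end
end

section
/- Diagonal values of the boundary term: for all τ, s ∈ [0,1], φ_τ(s,s) = 2·min{s, 1−s, τ, 1−τ}. Equivalently: φ_τ(s,s) = 2s if s ≤ min{τ,1−τ}; φ_τ(s,s) = 2·min{τ,1−τ} if min{τ,1−τ} ≤ s ≤ max{τ,1−τ}; and φ_τ(s,s) = 2(1−s) if s ≥ max{τ,1−τ}. -/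
open MeasureTheory Set

noncomputable section

/-- A set that agrees off a finite set with two disjoint open intervals of length `m`. -/
lemma vol_aux (S F : Set ℝ) (hF : F.Finite) (a c m : ℝ) (hm : 0 ≤ m) (hac : a + m ≤ c)
    (h : ∀ x, x ∉ F → (x ∈ S ↔ (a < x ∧ x < a + m) ∨ (c < x ∧ x < c + m))) :
    (volume S).toReal = 2 * m := by
  have h1 : S =ᵐ[volume] (Ioo a (a + m) ∪ Ioo c (c + m) : Set ℝ) := by
    have h0 : ∀ᵐ x ∂(volume : Measure ℝ), x ∉ F :=
      measure_eq_zero_iff_ae_notMem.mp (hF.measure_zero volume)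
    filter_upwards [h0] with x hx
    exact propext (h x hx)
  have hd : Disjoint (Ioo a (a + m)) (Ioo c (c + m)) := by
    rw [Set.disjoint_left]
    rintro x ⟨_, h2⟩ ⟨h3, _⟩
    linarith
  rw [measure_congr h1, measure_union hd measurableSet_Ioo, Real.volume_Ioo, Real.volume_Ioo,
    ← ENNReal.ofReal_add (by linarith) (by linarith), ENNReal.toReal_ofReal (by linarith)]
  ring

/-- Diagonal values of the boundary term: `φ_τ(s,s) = 2·min{s, 1−s, τ, 1−τ}`. -/
theorem phi_diag (τ s : ℝ) (hτ : τ ∈ Set.Icc (0 : ℝ) 1) (hs : s ∈ Set.Icc (0 : ℝ) 1) :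
    phi τ s s = 2 * min (min s (1 - s)) (min τ (1 - τ)) := by
  obtain ⟨t0, t1⟩ := hτ
  obtain ⟨s0, s1⟩ := hs
  have hF : ({0, 1, s, s - τ, 1 - τ, s + 1 - τ, -τ} : Set ℝ).Finite := Set.toFinite _
  unfold phi
  rcases le_total s τ with h1 | h1 <;> rcases le_total s (1 - τ) with h2 | h2
  · have e : min (min s (1 - s)) (min τ (1 - τ)) = s := by grind
    rw [e]
    refine vol_aux _ _ hF 0 (1 - τ) s (by linarith) (by linarith) ?_
    intro x hx
    simp only [Set.mem_inter_iff, Set.mem_symmDiff, Set.mem_union, Set.mem_Icc,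
      Set.mem_insert_iff, Set.mem_singleton_iff] at hx ⊢
    grind
  · have e : min (min s (1 - s)) (min τ (1 - τ)) = 1 - τ := by grind
    rw [e]
    refine vol_aux _ _ hF 0 s (1 - τ) (by linarith) (by linarith) ?_
    intro x hx
    simp only [Set.mem_inter_iff, Set.mem_symmDiff, Set.mem_union, Set.mem_Icc,
      Set.mem_insert_iff, Set.mem_singleton_iff] at hx ⊢
    grind
  · have e : min (min s (1 - s)) (min τ (1 - τ)) = τ := by grind
    rw [e]
    refine vol_aux _ _ hF (s - τ) (1 - τ) τ (by linarith) (by linarith) ?_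
    intro x hx
    simp only [Set.mem_inter_iff, Set.mem_symmDiff, Set.mem_union, Set.mem_Icc,
      Set.mem_insert_iff, Set.mem_singleton_iff] at hx ⊢
    grind
  · have e : min (min s (1 - s)) (min τ (1 - τ)) = 1 - s := by grind
    rw [e]
    refine vol_aux _ _ hF (s - τ) s (1 - s) (by linarith) (by linarith) ?_
    intro x hx
    simp only [Set.mem_inter_iff, Set.mem_symmDiff, Set.mem_union, Set.mem_Icc,
      Set.mem_insert_iff, Set.mem_singleton_iff] at hx ⊢
    grind
end
end

section
/- Cluster points of the periodicity defect for irrational L: if L > 0 is irrational, then every t ∈ [0,1] is a cluster point of the sequence τ_n = (⌊Ln²⌋ − n·⌊Ln⌋)/n; that is, the set of cluster points of (τ_n) is the whole interval [0,1]. -/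
open Filter Set

noncomputable section

/-- The periodicity-defect sequence `τ_n = (⌊Ln²⌋ − n·⌊Ln⌋)/n`. -/
def tauSeq (L : ℝ) (n : ℕ) : ℝ :=
  ((Nat.floor (L * (n : ℝ) ^ 2) : ℝ) - (n : ℝ) * (Nat.floor (L * (n : ℝ)) : ℝ)) / n

lemma exists_nat_int_mem_Ioo (L : ℝ) (hirr : Irrational L) (a b : ℝ) (hab : a < b) (N : ℕ) :
    ∃ n : ℕ, N ≤ n ∧ ∃ k : ℤ, (n : ℝ) * L - k ∈ Ioo a b := by
  have h1 : DenseRange (fun z : ℤ => z • (L : AddCircle (1 : ℝ))) :=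
    AddCircle.denseRange_zsmul_coe_iff.2 (by simpa using hirr)
  have h2 : DenseRange (fun n : ℕ => n • (L : AddCircle (1 : ℝ))) := by
    have : Fact ((0 : ℝ) < 1) := ⟨one_pos⟩
    exact denseRange_zsmul_iff_nsmul.1 h1
  have h3 := QuotientAddGroup.dense_preimage_mk.2 h2
  obtain ⟨x, ⟨n, hn⟩, hx⟩ := h3.exists_mem_open (isOpen_Ioo (a := a - N * L) (b := b - N * L))
    (nonempty_Ioo.2 (by linarith))
  have hn' : ((n • L - x : ℝ) : AddCircle (1 : ℝ)) = 0 := by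
    rw [AddCircle.coe_sub, AddCircle.coe_nsmul, sub_eq_zero]
    exact hn
  obtain ⟨k, hk⟩ := (AddCircle.coe_eq_zero_iff 1).1 hn'
  obtain ⟨hx1, hx2⟩ := hx
  refine ⟨n + N, by omega, k, ?_⟩
  simp only [zsmul_eq_mul, nsmul_eq_mul, mul_one] at hk
  push_cast
  constructor <;> rw [hk] <;> linarith

lemma tauSeq_bounds (L : ℝ) (hL : 0 < L) (n : ℕ) (hn : 1 ≤ n) :
    tauSeq L n ≤ L * n - Nat.floor (L * (n : ℝ)) ∧
    L * n - Nat.floor (L * (n : ℝ)) - 1 / n ≤ tauSeq L n := by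
  have hn0 : (0 : ℝ) < n := by exact_mod_cast hn
  have h1 := Nat.floor_le (a := L * (n : ℝ) ^ 2) (by positivity)
  have h2 := Nat.lt_floor_add_one (L * (n : ℝ) ^ 2)
  unfold tauSeq
  constructor
  · rw [div_le_iff₀ hn0]; nlinarith
  · rw [le_div_iff₀ hn0, sub_mul, one_div, inv_mul_cancel₀ hn0.ne']; nlinarith

lemma tauSeq_frequently (L : ℝ) (hL : 0 < L) (hirr : Irrational L) (t : ℝ) (ht : t ∈ Icc (0 : ℝ) 1)
    (m : ℕ) : ∃ᶠ n in atTop, 1 ≤ n ∧ |tauSeq L n - t| < 2 / ((m : ℝ) + 1) := by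
  rw [frequently_atTop]
  intro N
  have hm : (0 : ℝ) < 1 / ((m : ℝ) + 1) := by positivity
  set e := 1 / ((m : ℝ) + 1) with he
  obtain ⟨n, hn, k, hk⟩ := exists_nat_int_mem_Ioo L hirr (max 0 (t - e)) (min 1 (t + e))
    (by rcases ht with ⟨h0, h1⟩
        refine max_lt (lt_min one_pos (by linarith)) (lt_min (by linarith) (by linarith)))
    (max N (m + 1))
  have hnN := (le_max_left _ _).trans hn
  have hnm := (le_max_right _ _).trans hn
  have hn1 : 1 ≤ n := by omega
  refine ⟨n, hnN, hn1, ?_⟩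
  obtain ⟨hka, hkb⟩ := hk
  obtain ⟨ha0, ha1⟩ := max_lt_iff.1 hka
  obtain ⟨hb0, hb1⟩ := lt_min_iff.1 hkb
  have hfl : ((Nat.floor (L * (n : ℝ)) : ℕ) : ℝ) = k := by
    rw [natCast_floor_eq_intCast_floor (by positivity)]
    congr 1
    rw [Int.floor_eq_iff]
    constructor <;> linarith
  obtain ⟨hu, hl⟩ := tauSeq_bounds L hL n hn1
  rw [hfl] at hu hl
  have hne : 1 / (n : ℝ) ≤ e := by
    apply one_div_le_one_div_of_le (by positivity)
    exact_mod_cast hnm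
  have h2 : 2 / ((m : ℝ) + 1) = e + e := by rw [he]; ring
  rw [h2, abs_lt]
  constructor <;> linarith

/-- Cluster points of the periodicity defect for irrational `L > 0`: the whole of `[0,1]`. -/
theorem tauSeq_clusterPts_irrational (L : ℝ) (hL : 0 < L) (hirr : Irrational L) :
    {t : ℝ | ∃ φ : ℕ → ℕ, StrictMono φ ∧ (∀ m, 1 ≤ φ m) ∧
        Tendsto (fun m => tauSeq L (φ m)) atTop (nhds t)} = Set.Icc 0 1 := by
  ext t
  constructor
  · rintro ⟨φ, hφ, h1, hlim⟩
    have hinv : Tendsto (fun m => 1 / (φ m : ℝ)) atTop (nhds 0) :=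
      tendsto_one_div_atTop_nhds_zero_nat.comp hφ.tendsto_atTop
    constructor
    · have h := hlim.add hinv
      rw [add_zero] at h
      refine ge_of_tendsto' h fun m => ?_
      have := (tauSeq_bounds L hL _ (h1 m)).2
      have := Nat.floor_le (a := L * (φ m : ℝ)) (by positivity)
      linarith
    · refine le_of_tendsto' hlim fun m => ?_
      have := (tauSeq_bounds L hL _ (h1 m)).1
      have := Nat.lt_floor_add_one (L * (φ m : ℝ))
      linarith
  · intro ht
    obtain ⟨φ, hφ, h⟩ := extraction_forall_of_frequently (tauSeq_frequently L hL hirr t ht)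
    refine ⟨φ, hφ, fun m => (h m).1, ?_⟩
    rw [tendsto_iff_dist_tendsto_zero]
    refine squeeze_zero (fun _ => dist_nonneg) (fun m => (h m).2.le) ?_
    have := (tendsto_one_div_add_atTop_nhds_zero_nat (𝕜 := ℝ)).const_mul 2
    simpa [div_eq_mul_inv] using this
end
end
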